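/- (Non-degeneracy for large μ.) Let g ∈ C¹([0,∞),[0,∞)) satisfy (g₊), (g_s), (g₀) and (g_∞). Let h ∈ L¹([a,b]) satisfy condition (h*) with m positivity intervals, and suppose in addition that for every i ∈ {1,…,m}: h⁺ ∈ BV(I_i⁺), h⁺(t) = h⁺(σ_i + τ_i − t) for a.e. t ∈ [σ_i, τ_i], and h⁺ is non-decreasing on [σ_i, ζ_i], where ζ_i := (σ_i + τ_i)/2. Then there exists μ** > 0 such that for every μ > μ** every positive solution u of (D_μ) is non-degenerate, i.e. the only Carathéodory solution w of w'' + (h⁺(t) − μ h⁻(t)) g'(u(t)) w = 0 with w(a) = 0 = w(b) is w ≡ 0. -/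

import Mathlib

open Set MeasureTheory Filter Topology

/-- Carathéodory solution of `u'' + F(t, u) = 0` on `[a,b]`. -/
def IsCaraSol (a b : ℝ) (F : ℝ → ℝ → ℝ) (u u' : ℝ → ℝ) : Prop :=
  (∀ t ∈ Set.Icc a b, HasDerivAt u (u' t) t) ∧
  IntervalIntegrable (fun s => F s (u s)) MeasureTheory.volume a b ∧
  ∀ t ∈ Set.Icc a b, u' t = u' a - ∫ s in a..t, F s (u s)

/-- The positive part `h⁺ = |h|/2 + h/2` of a weight function. -/
noncomputable def posW (h : ℝ → ℝ) : ℝ → ℝ := fun t => |h t| / 2 + h t / 2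

/-- The negative part `h⁻ = |h|/2 - h/2` of a weight function. -/
noncomputable def negW (h : ℝ → ℝ) : ℝ → ℝ := fun t => |h t| / 2 - h t / 2

/-!
On a single positivity interval, let `u > 0` vanish at both ends. By the method of moving planes `u`
increases strictly up to the midpoint. If `w` solves the linearized equation, then
`(u' w')' = -h⁺ (g(u) w)'`, and since `h⁺` is nondecreasing on the left half, integrating this
against the measure `dh⁺` shows that `w` has no two consecutive zeros there. A Dirichlet solution
`w` would hence have a constant sign, which Green's formula for `u` and `w` excludes because
`g(s) < g'(s) s`.

For the whole interval, superlinearity bounds the positive solutions independently of `μ`. As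
`μ → ∞`, mass of `h⁻` next to an endpoint of a positivity interval forces `u → 0` at that endpoint,
and comparing the growth of the slopes of `w²` and of `u` forces `w → 0` there as well, unless the
limiting slope of `u` vanishes. A compactness argument then yields limits `U`, `W` on the positivity
interval with `g'(U) W = 0`: either `U` vanishes identically, or the Dirichlet case applies. So
`∫ h⁺ g'(u) w²` is small, uniformly over `|w| ≤ 1`, while `∫ w'² ≤ ∫ h⁺ g'(u) w²` bounds it below as
soon as `max |w| = 1`.
-/

/-! ### Carathéodory solutions of `u'' = f` -/

section IntervalIntegral

variable {x y s t : ℝ} {f F G φ ψ : ℝ → ℝ}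

lemma intervalIntegrable_of_mem_Icc (hf : IntervalIntegrable f volume x y)
    (hs : s ∈ Icc x y) (ht : t ∈ Icc x y) : IntervalIntegrable f volume s t := by
  refine hf.mono_set ?_
  rw [uIcc_of_le (hs.1.trans hs.2)]
  exact uIcc_subset_Icc hs ht

lemma ae_restrict_uIoc_of_ae_restrict_Icc {p : ℝ → Prop}
    (h : ∀ᵐ r ∂volume.restrict (Icc x y), p r) (hs : s ∈ Icc x y) (ht : t ∈ Icc x y) :
    ∀ᵐ r ∂volume.restrict (uIoc s t), p r :=
  ae_restrict_of_ae_restrict_of_subset (uIoc_subset_uIcc.trans (uIcc_subset_Icc hs ht)) h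

lemma absolutelyContinuousOnInterval_const_add_integral
    (hφ : IntervalIntegrable φ volume x y) (c : ℝ) :
    AbsolutelyContinuousOnInterval (fun t => c + ∫ r in x..t, φ r) x y := by
  have hconst : AbsolutelyContinuousOnInterval (fun _ : ℝ => c) x y :=
    (contDiffOn_const (n := 1)).absolutelyContinuousOnInterval
  exact hconst.add (hφ.absolutelyContinuousOnInterval_intervalIntegral left_mem_uIcc)

lemma integral_mul_add_mul_eq_sub (hxy : x ≤ y)
    (hφ : IntervalIntegrable φ volume x y) (hψ : IntervalIntegrable ψ volume x y)
    (hF : ∀ t ∈ Icc x y, F t - F x = ∫ r in x..t, φ r)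
    (hG : ∀ t ∈ Icc x y, G t - G x = ∫ r in x..t, ψ r) :
    ∫ r in x..y, (φ r * G r + F r * ψ r) = F y * G y - F x * G x := by
  have hF' : ∀ t ∈ Icc x y, F x + ∫ r in x..t, φ r = F t := fun t ht => by rw [← hF t ht]; ring
  have hG' : ∀ t ∈ Icc x y, G x + ∫ r in x..t, ψ r = G t := fun t ht => by rw [← hG t ht]; ring
  have hparts := (absolutelyContinuousOnInterval_const_add_integral hφ (F x)
    ).integral_deriv_mul_eq_sub (absolutelyContinuousOnInterval_const_add_integral hψ (G x))
  rw [hF' y (right_mem_Icc.2 hxy), hG' y (right_mem_Icc.2 hxy), hF' x (left_mem_Icc.2 hxy),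
    hG' x (left_mem_Icc.2 hxy)] at hparts
  rw [← hparts]
  refine intervalIntegral.integral_congr_ae ?_
  filter_upwards [hφ.ae_hasDerivAt_integral, hψ.ae_hasDerivAt_integral] with r hφr hψr hr
  have hr' : r ∈ uIcc x y := uIoc_subset_uIcc hr
  have hrI : r ∈ Icc x y := by rwa [uIcc_of_le hxy] at hr'
  rw [((hφr hr' x left_mem_uIcc).const_add _).deriv, ((hψr hr' x left_mem_uIcc).const_add _).deriv,
    hF' r hrI, hG' r hrI]

end IntervalIntegral

section Convex

variable {S : Set ℝ} {u : ℝ → ℝ} {s t d : ℝ}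

lemma add_mul_sub_le_of_convexOn (hu : ConvexOn ℝ S u) (hs : s ∈ S) (ht : t ∈ S)
    (hd : HasDerivAt u d s) : u s + d * (t - s) ≤ u t := by
  rcases lt_trichotomy s t with hst | rfl | hst
  · have hslope := hu.le_slope_of_hasDerivAt hs ht hst hd
    rw [slope_def_field, le_div_iff₀ (sub_pos.2 hst)] at hslope
    linarith
  · simp
  · have hslope := hu.slope_le_of_hasDerivAt ht hs hst hd
    rw [slope_def_field, div_le_iff₀ (sub_pos.2 hst)] at hslope
    linarith

lemma le_add_mul_sub_of_concaveOn (hu : ConcaveOn ℝ S u) (hs : s ∈ S) (ht : t ∈ S)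
    (hd : HasDerivAt u d s) : u t ≤ u s + d * (t - s) := by
  have hneg := add_mul_sub_le_of_convexOn hu.neg hs ht hd.neg
  simp only [Pi.neg_apply] at hneg
  linarith

end Convex

/-- The Carathéodory form of `u'' = f`, `v = u'` on `[x, y]`. As in `IsCaraSol`, the derivative of
`u` is two-sided at both endpoints. -/
structure IsSecondPrimitive (x y : ℝ) (f u v : ℝ → ℝ) : Prop where
  le : x ≤ y
  hasDerivAt : ∀ t ∈ Icc x y, HasDerivAt u (v t) t
  intervalIntegrable : IntervalIntegrable f volume x y
  sub_eq_integral : ∀ s ∈ Icc x y, ∀ t ∈ Icc x y, v t - v s = ∫ r in s..t, f r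

namespace IsSecondPrimitive

variable {x y x' y' s t c : ℝ} {f f₁ f₂ u u₁ u₂ v v₁ v₂ : ℝ → ℝ}

lemma left_mem (h : IsSecondPrimitive x y f u v) : x ∈ Icc x y := left_mem_Icc.2 h.le

lemma right_mem (h : IsSecondPrimitive x y f u v) : y ∈ Icc x y := right_mem_Icc.2 h.le

lemma mono (h : IsSecondPrimitive x y f u v) (hx : x ≤ x') (hxy : x' ≤ y') (hy : y' ≤ y) :
    IsSecondPrimitive x' y' f u v := by
  have hsub : Icc x' y' ⊆ Icc x y := Icc_subset_Icc hx hy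
  exact ⟨hxy, fun t ht => h.hasDerivAt t (hsub ht),
    intervalIntegrable_of_mem_Icc h.intervalIntegrable (hsub (left_mem_Icc.2 hxy))
      (hsub (right_mem_Icc.2 hxy)),
    fun s hs t ht => h.sub_eq_integral s (hsub hs) t (hsub ht)⟩

lemma congr_ae (h : IsSecondPrimitive x y f₁ u v)
    (hf : ∀ᵐ r ∂volume.restrict (Icc x y), f₁ r = f₂ r) : IsSecondPrimitive x y f₂ u v where
  le := h.le
  hasDerivAt := h.hasDerivAt
  intervalIntegrable := h.intervalIntegrable.congr_ae
    (ae_restrict_uIoc_of_ae_restrict_Icc hf h.left_mem h.right_mem)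
  sub_eq_integral s hs t ht := by
    rw [h.sub_eq_integral s hs t ht]
    exact intervalIntegral.integral_congr_ae_restrict (ae_restrict_uIoc_of_ae_restrict_Icc hf hs ht)

lemma continuousOn (h : IsSecondPrimitive x y f u v) : ContinuousOn u (Icc x y) :=
  fun t ht => (h.hasDerivAt t ht).continuousAt.continuousWithinAt

lemma continuousOn_deriv (h : IsSecondPrimitive x y f u v) : ContinuousOn v (Icc x y) := by
  have hprim := intervalIntegral.continuousOn_primitive_interval' h.intervalIntegrable left_mem_uIcc
  rw [uIcc_of_le h.le] at hprim
  refine (hprim.const_add (v x)).congr fun t ht => ?_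
  linarith [h.sub_eq_integral x h.left_mem t ht]

lemma deriv_intervalIntegrable (h : IsSecondPrimitive x y f u v) :
    IntervalIntegrable v volume x y :=
  h.continuousOn_deriv.intervalIntegrable_of_Icc h.le

lemma sub_eq_integral_deriv (h : IsSecondPrimitive x y f u v) (hs : s ∈ Icc x y)
    (ht : t ∈ Icc x y) : u t - u s = ∫ r in s..t, v r :=
  (intervalIntegral.integral_eq_sub_of_hasDerivAt
    (fun r hr => h.hasDerivAt r (uIcc_subset_Icc hs ht hr))
    (intervalIntegrable_of_mem_Icc h.deriv_intervalIntegrable hs ht)).symm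

lemma comp_sub_left (h : IsSecondPrimitive x y f u v) (c : ℝ) :
    IsSecondPrimitive (c - y) (c - x) (fun t => f (c - t)) (fun t => u (c - t))
      (fun t => -v (c - t)) := by
  have hmem : ∀ t ∈ Icc (c - y) (c - x), c - t ∈ Icc x y := fun t ht =>
    ⟨by linarith [ht.2], by linarith [ht.1]⟩
  refine ⟨by linarith [h.le], fun t ht => ?_, (h.intervalIntegrable.comp_sub_left c).symm,
    fun s hs t ht => ?_⟩
  · have hcomp := (h.hasDerivAt (c - t) (hmem t ht)).comp t ((hasDerivAt_id t).const_sub c)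
    rwa [mul_neg_one] at hcomp
  · rw [intervalIntegral.integral_comp_sub_left f c,
      ← h.sub_eq_integral _ (hmem t ht) _ (hmem s hs)]
    ring

lemma reflect (h : IsSecondPrimitive x y f u v) :
    IsSecondPrimitive x y (fun t => f (x + y - t)) (fun t => u (x + y - t))
      (fun t => -v (x + y - t)) := by
  simpa only [add_sub_cancel_right, add_sub_cancel_left] using h.comp_sub_left (x + y)

lemma const_mul (h : IsSecondPrimitive x y f u v) (c : ℝ) :
    IsSecondPrimitive x y (fun t => c * f t) (fun t => c * u t) (fun t => c * v t) where
  le := h.le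
  hasDerivAt t ht := (h.hasDerivAt t ht).const_mul c
  intervalIntegrable := h.intervalIntegrable.const_mul c
  sub_eq_integral s hs t ht := by
    rw [intervalIntegral.integral_const_mul, ← h.sub_eq_integral s hs t ht]
    ring

lemma neg (h : IsSecondPrimitive x y f u v) :
    IsSecondPrimitive x y (fun t => -f t) (fun t => -u t) (fun t => -v t) := by
  simpa only [neg_one_mul] using h.const_mul (-1)

lemma sub (h₁ : IsSecondPrimitive x y f₁ u₁ v₁) (h₂ : IsSecondPrimitive x y f₂ u₂ v₂) :
    IsSecondPrimitive x y (fun t => f₁ t - f₂ t) (fun t => u₁ t - u₂ t)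
      (fun t => v₁ t - v₂ t) where
  le := h₁.le
  hasDerivAt t ht := (h₁.hasDerivAt t ht).sub (h₂.hasDerivAt t ht)
  intervalIntegrable := h₁.intervalIntegrable.sub h₂.intervalIntegrable
  sub_eq_integral s hs t ht := by
    rw [intervalIntegral.integral_sub (intervalIntegrable_of_mem_Icc h₁.intervalIntegrable hs ht)
      (intervalIntegrable_of_mem_Icc h₂.intervalIntegrable hs ht),
      ← h₁.sub_eq_integral s hs t ht, ← h₂.sub_eq_integral s hs t ht]
    ring

lemma monotoneOn_deriv (h : IsSecondPrimitive x y f u v)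
    (hf : ∀ᵐ r ∂volume.restrict (Icc x y), 0 ≤ f r) : MonotoneOn v (Icc x y) := by
  intro s hs t ht hst
  have hnonneg : 0 ≤ ∫ r in s..t, f r := intervalIntegral.integral_nonneg_of_ae_restrict hst
    (ae_restrict_of_ae_restrict_of_subset (Icc_subset_Icc hs.1 ht.2) hf)
  rw [← h.sub_eq_integral s hs t ht] at hnonneg
  linarith

lemma convexOn (h : IsSecondPrimitive x y f u v)
    (hf : ∀ᵐ r ∂volume.restrict (Icc x y), 0 ≤ f r) : ConvexOn ℝ (Icc x y) u := by
  refine MonotoneOn.convexOn_of_deriv (convex_Icc x y) h.continuousOn (fun t ht =>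
    (h.hasDerivAt t (interior_subset ht)).differentiableAt.differentiableWithinAt) ?_
  exact ((h.monotoneOn_deriv hf).mono interior_subset).congr fun t ht =>
    ((h.hasDerivAt t (interior_subset ht)).deriv).symm

lemma concaveOn (h : IsSecondPrimitive x y f u v)
    (hf : ∀ᵐ r ∂volume.restrict (Icc x y), f r ≤ 0) : ConcaveOn ℝ (Icc x y) u :=
  neg_convexOn_iff.1 (h.neg.convexOn (hf.mono fun _ hr => neg_nonneg.2 hr))

lemma le_add_mul_sub (h : IsSecondPrimitive x y f u v)
    (hf : ∀ᵐ r ∂volume.restrict (Icc x y), f r ≤ 0) (hs : s ∈ Icc x y) (ht : t ∈ Icc x y) :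
    u t ≤ u s + v s * (t - s) :=
  le_add_mul_sub_of_concaveOn (h.concaveOn hf) hs ht (h.hasDerivAt s hs)

lemma add_mul_sub_le (h : IsSecondPrimitive x y f u v)
    (hf : ∀ᵐ r ∂volume.restrict (Icc x y), 0 ≤ f r) (hs : s ∈ Icc x y) (ht : t ∈ Icc x y) :
    u s + v s * (t - s) ≤ u t :=
  add_mul_sub_le_of_convexOn (h.convexOn hf) hs ht (h.hasDerivAt s hs)

lemma integral_deriv_mul_deriv_add (h₁ : IsSecondPrimitive x y f₁ u₁ v₁)
    (h₂ : IsSecondPrimitive x y f₂ u₂ v₂) :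
    ∫ r in x..y, (v₁ r * v₂ r + u₁ r * f₂ r) = u₁ y * v₂ y - u₁ x * v₂ x :=
  integral_mul_add_mul_eq_sub h₁.le h₁.deriv_intervalIntegrable h₂.intervalIntegrable
    (fun _ ht => h₁.sub_eq_integral_deriv h₁.left_mem ht)
    (fun _ ht => h₂.sub_eq_integral _ h₂.left_mem _ ht)

end IsSecondPrimitive

section Monotone

variable {x y C : ℝ} {F P φ ψ : ℝ → ℝ}

lemma le_of_sub_le_mul_sub_mul_sub (hxy : x ≤ y)
    (hF : ∀ s ∈ Icc x y, ∀ t ∈ Icc x y, s ≤ t → F t - F s ≤ C * (t - s) * (P t - P s)) :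
    F y ≤ F x := by
  have hbound : ∀ n : ℕ, F y - F x ≤ C * (y - x) * (P y - P x) / ((n : ℝ) + 1) := by
    intro n
    set η := (y - x) / ((n : ℝ) + 1) with hη
    set p : ℕ → ℝ := fun k => x + k * η with hp
    have hη0 : 0 ≤ η := div_nonneg (sub_nonneg.2 hxy) (by positivity)
    have hηn : ((n : ℝ) + 1) * η = y - x := by rw [hη]; field_simp
    have hp0 : p 0 = x := by simp [hp]
    have hpn : p (n + 1) = y := by simp only [hp]; push_cast; linarith
    have hmem : ∀ k ≤ n + 1, p k ∈ Icc x y := fun k hk => by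
      have hk' : (k : ℝ) * η ≤ ((n : ℝ) + 1) * η := by gcongr; exact_mod_cast hk
      exact ⟨le_add_of_nonneg_right (by positivity), by simp only [hp]; linarith⟩
    calc F y - F x = ∑ k ∈ Finset.range (n + 1), (F (p (k + 1)) - F (p k)) := by
          rw [Finset.sum_range_sub (fun k => F (p k)), hp0, hpn]
      _ ≤ ∑ k ∈ Finset.range (n + 1), C * η * (P (p (k + 1)) - P (p k)) := by
          refine Finset.sum_le_sum fun k hk => ?_
          have hk' := Finset.mem_range.1 hk
          have hstep : p (k + 1) - p k = η := by simp only [hp]; push_cast; ring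
          simpa only [hstep] using
            hF _ (hmem k (by lia)) _ (hmem (k + 1) (by lia)) (by linarith)
      _ = C * (y - x) * (P y - P x) / ((n : ℝ) + 1) := by
          rw [← Finset.mul_sum, Finset.sum_range_sub (fun k => P (p k)), hp0, hpn, hη]
          ring
  have hlim : Tendsto (fun n : ℕ => C * (y - x) * (P y - P x) / ((n : ℝ) + 1)) atTop (𝓝 0) := by
    simpa only [Nat.cast_add_one] using (tendsto_add_atTop_iff_nat 1).2
      (tendsto_const_div_atTop_nhds_zero_nat (C * (y - x) * (P y - P x)))
  linarith [ge_of_tendsto' hlim hbound]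

-- Integration by parts against the nonnegative measure `dP`, without constructing the measure.
lemma integral_mul_deriv_le_of_monotoneOn (hxy : x ≤ y) (hP : MonotoneOn P (Icc x y))
    (hφ : ∀ t ∈ Icc x y, HasDerivAt φ (ψ t) t) (hψ : ContinuousOn ψ (Icc x y))
    (hφ0 : ∀ t ∈ Icc x y, 0 ≤ φ t) :
    ∫ t in x..y, P t * ψ t ≤ P y * φ y - P x * φ x := by
  obtain ⟨C, hC⟩ := isCompact_Icc.exists_bound_of_continuousOn hψ
  have hψI : IntervalIntegrable ψ volume x y := hψ.intervalIntegrable_of_Icc hxy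
  have hPψ : IntervalIntegrable (fun t => P t * ψ t) volume x y := by
    rw [← uIcc_of_le hxy] at hP hψ
    exact hP.intervalIntegrable.mul_continuousOn hψ
  have hx : x ∈ Icc x y := left_mem_Icc.2 hxy
  have hincr : ∀ s ∈ Icc x y, ∀ t ∈ Icc x y, s ≤ t →
      ∫ r in s..t, P r * ψ r ≤ P t * φ t - P s * φ s + C * (t - s) * (P t - P s) := by
    intro s hs t ht hst
    have hsI := intervalIntegrable_of_mem_Icc hψI hs ht
    have hconst : ∫ r in s..t, P s * ψ r = P s * (φ t - φ s) := by
      rw [intervalIntegral.integral_const_mul, intervalIntegral.integral_eq_sub_of_hasDerivAt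
        (fun r hr => hφ r (uIcc_subset_Icc hs ht hr)) hsI]
    have hle : ∫ r in s..t, P r * ψ r ≤ ∫ r in s..t, (P s * ψ r + C * (P t - P s)) := by
      refine intervalIntegral.integral_mono_on hst (intervalIntegrable_of_mem_Icc hPψ hs ht)
        ((hsI.const_mul _).add intervalIntegrable_const) fun r hr => ?_
      have hr' : r ∈ Icc x y := ⟨hs.1.trans hr.1, hr.2.trans ht.2⟩
      have hψr := (le_abs_self _).trans (hC r hr')
      have hC0 : 0 ≤ C := (norm_nonneg _).trans (hC r hr')
      nlinarith [mul_nonneg (sub_nonneg.2 (hP hs hr' hr.1)) (sub_nonneg.2 hψr),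
        mul_nonneg hC0 (sub_nonneg.2 (hP hr' ht hr.2))]
    rw [intervalIntegral.integral_add (hsI.const_mul _) intervalIntegrable_const, hconst,
      intervalIntegral.integral_const, smul_eq_mul] at hle
    nlinarith [mul_le_mul_of_nonneg_right (hP hs ht hst) (hφ0 t ht)]
  have hF := le_of_sub_le_mul_sub_mul_sub (P := P) (C := C)
    (F := fun t => (∫ r in x..t, P r * ψ r) - P t * φ t) hxy fun s hs t ht hst => by
      have hsplit := intervalIntegral.integral_add_adjacent_intervals
        (intervalIntegrable_of_mem_Icc hPψ hx hs) (intervalIntegrable_of_mem_Icc hPψ hs ht)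
      linarith [hincr s hs t ht hst]
  simp only [intervalIntegral.integral_same] at hF
  linarith

end Monotone

section Continuous

variable {x y c : ℝ} {u w f : ℝ → ℝ}

lemma nonneg_on_Icc_of_pos_on_Ioo (hxy : x ≠ y) (hu : ContinuousOn u (Icc x y))
    (hpos : ∀ t ∈ Ioo x y, 0 < u t) : ∀ t ∈ Icc x y, 0 ≤ u t := by
  rw [← closure_Ioo hxy] at hu ⊢
  exact fun t ht => le_on_closure (fun s hs => (hpos s hs).le) continuousOn_const hu ht

lemma integral_pos_of_pos_on_Ioo {x' y' : ℝ} (hx : x ≤ x') (hxy : x' < y') (hy : y' ≤ y)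
    (hf : IntervalIntegrable f volume x y) (hnonneg : ∀ t ∈ Icc x y, 0 ≤ f t)
    (hpos : ∀ t ∈ Ioo x' y', 0 < f t) : 0 < ∫ t in x..y, f t :=
  (intervalIntegral.intervalIntegral_pos_of_pos_on
    (intervalIntegrable_of_mem_Icc hf ⟨hx, hxy.le.trans hy⟩ ⟨hx.trans hxy.le, hy⟩)
    hpos hxy).trans_le (intervalIntegral.integral_mono_interval hx hxy.le hy
      ((ae_restrict_iff' measurableSet_Ioc).2 (ae_of_all _ fun t ht => hnonneg t ⟨ht.1.le, ht.2⟩))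
      hf)

lemma exists_zeros_pos_on_Ioo (hw : ContinuousOn w (Icc x y)) (hx : w x = 0) (hy : w y = 0)
    (hc : c ∈ Icc x y) (hwc : 0 < w c) :
    ∃ α β, x ≤ α ∧ α < c ∧ c < β ∧ β ≤ y ∧ w α = 0 ∧ w β = 0 ∧ ∀ t ∈ Ioo α β, 0 < w t := by
  have hleft : ContinuousOn w (Icc x c) := hw.mono (Icc_subset_Icc le_rfl hc.2)
  have hright : ContinuousOn w (Icc c y) := hw.mono (Icc_subset_Icc hc.1 le_rfl)
  obtain ⟨α, ⟨hα, hwα⟩, hα_max⟩ := (isCompact_Icc.of_isClosed_subset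
    (hleft.preimage_isClosed_of_isClosed isClosed_Icc isClosed_singleton)
    inter_subset_left).exists_isGreatest ⟨x, left_mem_Icc.2 hc.1, hx⟩
  obtain ⟨β, ⟨hβ, hwβ⟩, hβ_min⟩ := (isCompact_Icc.of_isClosed_subset
    (hright.preimage_isClosed_of_isClosed isClosed_Icc isClosed_singleton)
    inter_subset_left).exists_isLeast ⟨y, right_mem_Icc.2 hc.2, hy⟩
  have hαc : α < c := hα.2.lt_of_ne (by rintro rfl; exact hwc.ne' hwα)
  have hcβ : c < β := hβ.1.lt_of_ne (by rintro rfl; exact hwc.ne' hwβ)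
  refine ⟨α, β, hα.1, hαc, hcβ, hβ.2, hwα, hwβ, fun t ht => ?_⟩
  by_contra! hwt
  rcases le_total t c with htc | hct
  · obtain ⟨s, hs, hws⟩ := intermediate_value_Icc htc
      (hleft.mono (Icc_subset_Icc (hα.1.trans ht.1.le) le_rfl)) ⟨hwt, hwc.le⟩
    exact (hα_max ⟨⟨hα.1.trans (ht.1.le.trans hs.1), hs.2⟩, hws⟩).not_gt (ht.1.trans_le hs.1)
  · obtain ⟨s, hs, hws⟩ := intermediate_value_Icc' hct
      (hright.mono (Icc_subset_Icc le_rfl (ht.2.le.trans hβ.2))) ⟨hwt, hwc.le⟩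
    exact (hβ_min ⟨⟨hs.1, hs.2.trans (ht.2.le.trans hβ.2)⟩, hws⟩).not_gt (hs.2.trans_lt ht.2)

end Continuous

lemma IsSecondPrimitive.exists_monotoneOn_of_deriv_pos {x y s : ℝ} {f u v : ℝ → ℝ}
    (h : IsSecondPrimitive x y f u v) (hs : s ∈ Icc x y) (hv : 0 < v s) :
    ∃ ε > 0, MonotoneOn u (Metric.ball s ε ∩ Icc x y) := by
  obtain ⟨ε, hε, hpos⟩ := Metric.mem_nhdsWithin_iff.1
    ((h.continuousOn_deriv s hs).eventually (lt_mem_nhds hv))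
  refine ⟨ε, hε, monotoneOn_of_deriv_nonneg ((convex_ball s ε).inter (convex_Icc x y))
    (h.continuousOn.mono inter_subset_right) (fun t ht => ?_) fun t ht => ?_⟩ <;>
  have hderiv := h.hasDerivAt t (interior_subset ht).2
  · exact hderiv.differentiableAt.differentiableWithinAt
  · rw [hderiv.deriv]
    exact (show 0 < v t from hpos (interior_subset ht)).le

/-- The class of nonlinearities of the theorem, extended by `0` to the left of the origin: `C¹`,
with `g(s) < g'(s) s` for `s > 0`, `g'(0) = 0` and `g(s)/s → ∞`. -/
structure IsSuperlinear (g : ℝ → ℝ) : Prop where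
  contDiff : ContDiff ℝ 1 g
  map_zero : g 0 = 0
  pos : ∀ s > 0, 0 < g s
  lt_deriv_mul : ∀ s > 0, g s < deriv g s * s
  deriv_zero : deriv g 0 = 0
  tendsto_div : Tendsto (fun s => g s / s) atTop atTop

namespace IsSuperlinear

variable {g : ℝ → ℝ} {s : ℝ}

lemma hasDerivAt (hg : IsSuperlinear g) (s : ℝ) : HasDerivAt g (deriv g s) s :=
  (hg.contDiff.differentiable one_ne_zero s).hasDerivAt

lemma continuous_deriv (hg : IsSuperlinear g) : Continuous (deriv g) :=
  hg.contDiff.continuous_deriv le_rfl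

lemma nonneg (hg : IsSuperlinear g) (hs : 0 ≤ s) : 0 ≤ g s := by
  rcases hs.eq_or_lt with rfl | hs
  · exact hg.map_zero.ge
  · exact (hg.pos s hs).le

lemma deriv_pos (hg : IsSuperlinear g) (hs : 0 < s) : 0 < deriv g s :=
  pos_of_mul_pos_left ((hg.pos s hs).trans (hg.lt_deriv_mul s hs)) hs.le

lemma deriv_nonneg (hg : IsSuperlinear g) (hs : 0 ≤ s) : 0 ≤ deriv g s := by
  rcases hs.eq_or_lt with rfl | hs
  · exact hg.deriv_zero.ge
  · exact (hg.deriv_pos hs).le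

lemma monotoneOn (hg : IsSuperlinear g) : MonotoneOn g (Ici 0) :=
  monotoneOn_of_deriv_nonneg (convex_Ici 0) hg.contDiff.continuous.continuousOn
    (fun s _ => (hg.hasDerivAt s).differentiableAt.differentiableWithinAt)
    fun _ hs => hg.deriv_nonneg (interior_subset hs)

lemma le_deriv_mul (hg : IsSuperlinear g) (hs : 0 ≤ s) : g s ≤ deriv g s * s := by
  rcases hs.eq_or_lt with rfl | hs
  · simp [hg.map_zero]
  · exact (hg.lt_deriv_mul s hs).le

end IsSuperlinear

/-- `P` is a nonnegative weight on `[σ, τ]`, symmetric about the midpoint, nondecreasing on the left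
half and positive somewhere in its interior. -/
structure IsSymmUnimodal (σ τ : ℝ) (P : ℝ → ℝ) : Prop where
  nonneg : ∀ t ∈ Icc σ τ, 0 ≤ P t
  symm : ∀ t, P (σ + τ - t) = P t
  monotoneOn : MonotoneOn P (Icc σ ((σ + τ) / 2))
  exists_pos : ∃ c ∈ Ioo σ ((σ + τ) / 2), 0 < P c

namespace IsSymmUnimodal

variable {σ τ s t : ℝ} {P : ℝ → ℝ}

lemma lt (hP : IsSymmUnimodal σ τ P) : σ < τ := by
  obtain ⟨c, hc, -⟩ := hP.exists_pos
  linarith [hc.1, hc.2]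

lemma le_of_add_le (hP : IsSymmUnimodal σ τ P) (hs : σ ≤ s) (hst : s ≤ t) (h : s + t ≤ σ + τ) :
    P s ≤ P t := by
  rcases le_total t ((σ + τ) / 2) with ht | ht
  · exact hP.monotoneOn ⟨hs, hst.trans ht⟩ ⟨hs.trans hst, ht⟩ hst
  · rw [← hP.symm t]
    exact hP.monotoneOn ⟨hs, by linarith⟩ ⟨by linarith, by linarith⟩ (by linarith)

lemma le_of_mem_Icc {c : ℝ} (hP : IsSymmUnimodal σ τ P) (hc : σ ≤ c)
    (ht : t ∈ Icc c (σ + τ - c)) : P c ≤ P t :=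
  hP.le_of_add_le hc ht.1 (by linarith [ht.2])

lemma intervalIntegrable (hP : IsSymmUnimodal σ τ P) : IntervalIntegrable P volume σ τ := by
  have hleft : IntervalIntegrable P volume σ ((σ + τ) / 2) := by
    apply MonotoneOn.intervalIntegrable
    rw [uIcc_of_le (by linarith [hP.lt])]
    exact hP.monotoneOn
  have hright := (hleft.comp_sub_left (σ + τ)).symm
  simp only [hP.symm, add_sub_cancel_left, sub_half] at hright
  exact hleft.trans hright

end IsSymmUnimodal

/-! ### Moving planes -/

section MovingPlanes

variable {σ τ l t : ℝ} {P g u v : ℝ → ℝ}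

lemma reflected_sub_isSecondPrimitive
    (h : IsSecondPrimitive σ τ (fun t => -P t * g (u t)) u v) (hσl : σ ≤ l)
    (hlm : l ≤ (σ + τ) / 2) :
    IsSecondPrimitive σ l (fun t => -P (2 * l - t) * g (u (2 * l - t)) - -P t * g (u t))
      (fun t => u (2 * l - t) - u t) (fun t => -v (2 * l - t) - v t) := by
  have hright := (h.mono (x' := l) (y' := 2 * l - σ) hσl (by linarith)
    (by linarith)).comp_sub_left (2 * l)
  rw [sub_sub_cancel, show 2 * l - l = l by ring] at hright
  exact hright.sub (h.mono le_rfl hσl (by linarith))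

lemma IsSymmUnimodal.reflected_sub_nonpos (hP : IsSymmUnimodal σ τ P) (hg : MonotoneOn g (Ici 0))
    (hg0 : 0 ≤ g 0) (hu0 : ∀ t ∈ Icc σ τ, 0 ≤ u t) (hlm : l ≤ (σ + τ) / 2)
    (hl : ∀ t ∈ Icc σ l, u t ≤ u (2 * l - t)) (ht : t ∈ Icc σ l) :
    -P (2 * l - t) * g (u (2 * l - t)) - -P t * g (u t) ≤ 0 := by
  have ht' : t ∈ Icc σ τ := ⟨ht.1, by linarith [ht.1, ht.2]⟩
  have hut := hu0 t ht'
  have hgt : 0 ≤ g (u t) := hg0.trans (hg self_mem_Ici hut hut)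
  have hgle : g (u t) ≤ g (u (2 * l - t)) := hg hut (hut.trans (hl t ht)) (hl t ht)
  have hPle : P t ≤ P (2 * l - t) := hP.le_of_add_le ht.1 (by linarith [ht.2]) (by linarith)
  linarith [mul_le_mul hPle hgle hgt ((hP.nonneg t ht').trans hPle)]

lemma IsSymmUnimodal.lt_reflection (hP : IsSymmUnimodal σ τ P) (hg : MonotoneOn g (Ici 0))
    (hg0 : 0 ≤ g 0) (h : IsSecondPrimitive σ τ (fun t => -P t * g (u t)) u v)
    (hu : ∀ t ∈ Ioo σ τ, 0 < u t) (hσ : u σ = 0) (hlm : l < (σ + τ) / 2)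
    (hl : ∀ t ∈ Icc σ l, u t ≤ u (2 * l - t)) (ht : t ∈ Ico σ l) : u t < u (2 * l - t) := by
  have hσl : σ < l := ht.1.trans_lt ht.2
  have hD := reflected_sub_isSecondPrimitive h hσl.le hlm.le
  have hu0 := nonneg_on_Icc_of_pos_on_Ioo hP.lt.ne h.continuousOn hu
  have hconc := ae_restrict_of_forall_mem (μ := volume) measurableSet_Icc fun r hr =>
    hP.reflected_sub_nonpos hg hg0 hu0 hlm.le hl hr
  have ht' : t ∈ Icc σ l := Ico_subset_Icc_self ht
  have hend := hD.le_add_mul_sub hconc ht' hD.right_mem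
  have hstart := hD.le_add_mul_sub hconc ht' hD.left_mem
  have hpos := hu (2 * l - σ) ⟨by linarith, by linarith⟩
  rw [show 2 * l - l = l by ring, sub_self] at hend
  rw [hσ] at hstart
  by_contra! hle
  nlinarith [ht.1, ht.2, mul_nonneg (sub_nonneg.2 ht.1) (sub_nonneg.2 ht.2.le)]

lemma IsSymmUnimodal.deriv_pos_of_le_reflection (hP : IsSymmUnimodal σ τ P)
    (hg : MonotoneOn g (Ici 0)) (hg0 : 0 ≤ g 0)
    (h : IsSecondPrimitive σ τ (fun t => -P t * g (u t)) u v) (hu : ∀ t ∈ Ioo σ τ, 0 < u t)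
    (hσ : u σ = 0) (hl : l ∈ Ico σ ((σ + τ) / 2)) (hle : ∀ t ∈ Icc σ l, u t ≤ u (2 * l - t)) :
    0 < v l := by
  have hu0 := nonneg_on_Icc_of_pos_on_Ioo hP.lt.ne h.continuousOn hu
  rcases hl.1.eq_or_lt with rfl | hσl
  · have hconc : ∀ᵐ r ∂volume.restrict (Icc σ τ), -P r * g (u r) ≤ 0 :=
      ae_restrict_of_forall_mem measurableSet_Icc fun r hr => mul_nonpos_of_nonpos_of_nonneg
        (neg_nonpos.2 (hP.nonneg r hr)) (hg0.trans (hg self_mem_Ici (hu0 r hr) (hu0 r hr)))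
    have hmid : (σ + τ) / 2 ∈ Ioo σ τ := ⟨hl.2, by linarith [hl.2]⟩
    have htan := h.le_add_mul_sub hconc h.left_mem (Ioo_subset_Icc_self hmid)
    rw [hσ, zero_add] at htan
    exact pos_of_mul_pos_left ((hu _ hmid).trans_le htan) (sub_pos.2 hl.2).le
  · have hD := reflected_sub_isSecondPrimitive h hσl.le hl.2.le
    have htan := hD.le_add_mul_sub (ae_restrict_of_forall_mem measurableSet_Icc fun r hr =>
      hP.reflected_sub_nonpos hg hg0 hu0 hl.2.le hle hr) hD.right_mem hD.left_mem
    rw [show 2 * l - l = l by ring, hσ] at htan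
    have hpos := hu (2 * l - σ) ⟨by linarith, by linarith [hl.2]⟩
    nlinarith

lemma isClosed_le_reflection (hu : ContinuousOn u (Icc σ τ)) :
    IsClosed ({l | ∀ t ∈ Icc σ l, u t ≤ u (2 * l - t)} ∩ Icc σ ((σ + τ) / 2)) := by
  refine isClosed_of_closure_subset fun l hl => ?_
  have hl' : l ∈ Icc σ ((σ + τ) / 2) :=
    closure_minimal inter_subset_right isClosed_Icc hl
  refine ⟨fun t ht => ?_, hl'⟩
  rcases ht.2.eq_or_lt with rfl | htl
  · rw [show 2 * t - t = t by ring]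
  have hcont : ContinuousWithinAt (fun l' => u (2 * l' - t)) (Icc t ((σ + τ) / 2)) l := by
    have hmaps : MapsTo (fun l' => 2 * l' - t) (Icc t ((σ + τ) / 2)) (Icc σ τ) := fun l' hl' =>
      ⟨by linarith [ht.1, hl'.1], by linarith [ht.1, hl'.2]⟩
    exact (hu.comp (by fun_prop) hmaps) l ⟨htl.le, hl'.2⟩
  by_contra! hlt
  have hev := hcont.eventually_lt_const hlt
  rw [eventually_nhdsWithin_iff] at hev
  obtain ⟨l', ⟨hl'S, hl'I⟩, htl', hl'lt⟩ :=
    ((mem_closure_iff_frequently.1 hl).and_eventually ((lt_mem_nhds htl).and hev)).exists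
  exact (hl'S t ⟨ht.1, htl'.le⟩).not_gt (hl'lt ⟨htl'.le, hl'I.2⟩)

lemma IsSymmUnimodal.eventually_le_reflection (hP : IsSymmUnimodal σ τ P)
    (hg : MonotoneOn g (Ici 0)) (hg0 : 0 ≤ g 0)
    (h : IsSecondPrimitive σ τ (fun t => -P t * g (u t)) u v) (hu : ∀ t ∈ Ioo σ τ, 0 < u t)
    (hσ : u σ = 0) (hl : l ∈ Ico σ ((σ + τ) / 2)) (hle : ∀ t ∈ Icc σ l, u t ≤ u (2 * l - t)) :
    ∀ᶠ l' in 𝓝 l, ∀ t ∈ Icc σ l', u t ≤ u (2 * l' - t) := by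
  have hlτ : l < τ := by linarith [hl.1, hl.2]
  have hnear : ∀ᶠ l' in 𝓝 l, ∀ t ∈ Icc σ τ, t ∈ Icc σ l' →
      u t ≤ u (2 * l' - t) := by
    refine isCompact_Icc.eventually_forall_of_forall_eventually fun t ht => ?_
    have hfst : Tendsto Prod.fst (𝓝 (l, t)) (𝓝 l) := continuousAt_fst
    have hsnd : Tendsto Prod.snd (𝓝 (l, t)) (𝓝 t) := continuousAt_snd
    have hrefl : Tendsto (fun p : ℝ × ℝ => 2 * p.1 - p.2) (𝓝 (l, t)) (𝓝 (2 * l - t)) :=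
      (hfst.const_mul 2).sub hsnd
    rcases lt_trichotomy t l with htl | rfl | hlt
    · have hgap := hP.lt_reflection hg hg0 h hu hσ hl.2 hle ⟨ht.1, htl⟩
      have hcont := (h.hasDerivAt t ht).continuousAt
      have hcont' := (h.hasDerivAt (2 * l - t)
        ⟨by linarith [ht.1], by linarith [ht.1, hl.2]⟩).continuousAt
      filter_upwards [(hcont.tendsto.comp hsnd).eventually_lt (hcont'.tendsto.comp hrefl) hgap]
        with p hp _ using hp.le
    · obtain ⟨ε, hε, hmono⟩ := h.exists_monotoneOn_of_deriv_pos ht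
        (hP.deriv_pos_of_le_reflection hg hg0 h hu hσ hl hle)
      rw [show 2 * t - t = t by ring] at hrefl
      have hball := Metric.ball_mem_nhds t hε
      filter_upwards [hsnd.eventually_mem hball, hrefl.eventually_mem hball,
        hrefl.eventually_lt_const hlτ] with p hp hp' hpτ hpI
      have hple : p.2 ≤ 2 * p.1 - p.2 := by linarith [hpI.2]
      exact hmono ⟨hp, hpI.1, hple.trans hpτ.le⟩ ⟨hp', hpI.1.trans hple, hpτ.le⟩ hple
    · filter_upwards [hfst.eventually_lt hsnd hlt] with p hp hpI using absurd hpI.2 hp.not_ge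
  filter_upwards [hnear, gt_mem_nhds hlτ] with l' hl' hl'τ t ht
  exact hl' t ⟨ht.1, ht.2.trans hl'τ.le⟩ ht

theorem IsSymmUnimodal.le_reflection (hP : IsSymmUnimodal σ τ P) (hg : MonotoneOn g (Ici 0))
    (hg0 : 0 ≤ g 0) (h : IsSecondPrimitive σ τ (fun t => -P t * g (u t)) u v)
    (hu : ∀ t ∈ Ioo σ τ, 0 < u t) (hσ : u σ = 0) (hl : l ∈ Icc σ ((σ + τ) / 2)) :
    ∀ t ∈ Icc σ l, u t ≤ u (2 * l - t) := by
  have hstart : ∀ t ∈ Icc σ σ, u t ≤ u (2 * σ - t) := by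
    simp only [Icc_self, mem_singleton_iff, forall_eq, two_mul, add_sub_cancel_right, le_refl]
  exact (isClosed_le_reflection h.continuousOn).Icc_subset_of_forall_mem_nhdsWithin hstart
    (fun l' hl' => mem_nhdsWithin_of_mem_nhds
      (hP.eventually_le_reflection hg hg0 h hu hσ hl'.2 hl'.1)) hl

lemma IsSymmUnimodal.deriv_pos_of_lt_midpoint (hP : IsSymmUnimodal σ τ P)
    (hg : MonotoneOn g (Ici 0)) (hg0 : 0 ≤ g 0)
    (h : IsSecondPrimitive σ τ (fun t => -P t * g (u t)) u v) (hu : ∀ t ∈ Ioo σ τ, 0 < u t)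
    (hσ : u σ = 0) (hl : l ∈ Ico σ ((σ + τ) / 2)) : 0 < v l :=
  hP.deriv_pos_of_le_reflection hg hg0 h hu hσ hl
    (hP.le_reflection hg hg0 h hu hσ (Ico_subset_Icc_self hl))

lemma IsSymmUnimodal.deriv_nonneg_of_le_midpoint (hP : IsSymmUnimodal σ τ P)
    (hg : MonotoneOn g (Ici 0)) (hg0 : 0 ≤ g 0)
    (h : IsSecondPrimitive σ τ (fun t => -P t * g (u t)) u v) (hu : ∀ t ∈ Ioo σ τ, 0 < u t)
    (hσ : u σ = 0) (hl : l ∈ Icc σ ((σ + τ) / 2)) : 0 ≤ v l :=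
  nonneg_on_Icc_of_pos_on_Ioo (by linarith [hP.lt])
    (h.continuousOn_deriv.mono (Icc_subset_Icc le_rfl (by linarith [hP.lt])))
    (fun _ ht => hP.deriv_pos_of_lt_midpoint hg hg0 h hu hσ (Ioo_subset_Ico_self ht)) l hl

end MovingPlanes

/-! ### Nondegeneracy on one positivity interval -/

/-- On `[x, y]`, `u` solves `u'' = k(t) g(u)` with derivative `v`, and `w` solves the linearization
`w'' = k(t) g'(u) w` with derivative `z`. The weight is `k = μ h⁻ - h⁺` in the application. -/
structure IsSolutionPair (x y : ℝ) (k g u v w z : ℝ → ℝ) : Prop where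
  sol : IsSecondPrimitive x y (fun t => k t * g (u t)) u v
  lin : IsSecondPrimitive x y (fun t => k t * deriv g (u t) * w t) w z

namespace IsSolutionPair

variable {x y x' y' : ℝ} {k k' g u v w z : ℝ → ℝ}

lemma mono (h : IsSolutionPair x y k g u v w z) (hx : x ≤ x') (hxy : x' ≤ y') (hy : y' ≤ y) :
    IsSolutionPair x' y' k g u v w z :=
  ⟨h.sol.mono hx hxy hy, h.lin.mono hx hxy hy⟩

lemma congr_ae (h : IsSolutionPair x y k g u v w z)
    (hk : ∀ᵐ r ∂volume.restrict (Icc x y), k r = k' r) : IsSolutionPair x y k' g u v w z :=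
  ⟨h.sol.congr_ae (hk.mono fun r hr => by rw [hr]),
    h.lin.congr_ae (hk.mono fun r hr => by rw [hr])⟩

lemma const_mul_lin (h : IsSolutionPair x y k g u v w z) (c : ℝ) :
    IsSolutionPair x y k g u v (fun t => c * w t) (fun t => c * z t) where
  sol := h.sol
  lin := by simpa only [mul_left_comm] using h.lin.const_mul c

lemma neg_lin (h : IsSolutionPair x y k g u v w z) :
    IsSolutionPair x y k g u v (fun t => -w t) (fun t => -z t) := by
  simpa only [neg_one_mul] using h.const_mul_lin (-1)

lemma reflect (h : IsSolutionPair x y k g u v w z) :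
    IsSolutionPair x y (fun t => k (x + y - t)) g (fun t => u (x + y - t))
      (fun t => -v (x + y - t)) (fun t => w (x + y - t)) (fun t => -z (x + y - t)) :=
  ⟨h.sol.reflect, h.lin.reflect⟩

lemma integral_weight_mul_eq_wronskian_sub (h : IsSolutionPair x y k g u v w z) :
    IntervalIntegrable (fun r => k r * (deriv g (u r) * u r - g (u r)) * w r) volume x y ∧
      ∫ r in x..y, k r * (deriv g (u r) * u r - g (u r)) * w r =
        (u y * z y - w y * v y) - (u x * z x - w x * v x) := by
  have huI := h.sol.continuousOn
  have hwI := h.lin.continuousOn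
  have hvI := h.sol.continuousOn_deriv
  have hzI := h.lin.continuousOn_deriv
  rw [← uIcc_of_le h.sol.le] at huI hwI hvI hzI
  have hint₁ : IntervalIntegrable (fun r => v r * z r + u r * (k r * deriv g (u r) * w r))
      volume x y :=
    (hvI.mul hzI).intervalIntegrable.add (h.lin.intervalIntegrable.continuousOn_mul huI)
  have hint₂ : IntervalIntegrable (fun r => z r * v r + w r * (k r * g (u r))) volume x y :=
    (hzI.mul hvI).intervalIntegrable.add (h.sol.intervalIntegrable.continuousOn_mul hwI)
  have hcongr : ∀ r, (v r * z r + u r * (k r * deriv g (u r) * w r)) -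
      (z r * v r + w r * (k r * g (u r))) = k r * (deriv g (u r) * u r - g (u r)) * w r :=
    fun r => by ring
  refine ⟨(hint₁.sub hint₂).congr fun r _ => hcongr r, ?_⟩
  simp only [← hcongr]
  rw [intervalIntegral.integral_sub hint₁ hint₂,
    h.sol.integral_deriv_mul_deriv_add h.lin, h.lin.integral_deriv_mul_deriv_add h.sol]
  ring

-- `(v z)' = -P (g(u) w)'`, and `dP` is a nonnegative measure.
lemma sub_le_deriv_mul_deriv_sub {P : ℝ → ℝ} (h : IsSolutionPair x y (fun t => -P t) g u v w z)
    (hg : ContDiff ℝ 1 g) (hP : MonotoneOn P (Icc x y)) (hw : ∀ t ∈ Icc x y, 0 ≤ g (u t) * w t) :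
    P x * (g (u x) * w x) - P y * (g (u y) * w y) ≤ v y * z y - v x * z x := by
  have hparts : ∫ r in x..y, (-P r * g (u r) * z r + v r * (-P r * deriv g (u r) * w r)) =
      v y * z y - v x * z x :=
    integral_mul_add_mul_eq_sub h.sol.le h.sol.intervalIntegrable h.lin.intervalIntegrable
      (fun t ht => h.sol.sub_eq_integral _ h.sol.left_mem _ ht)
      (fun t ht => h.lin.sub_eq_integral _ h.lin.left_mem _ ht)
  have hstieltjes : ∫ t in x..y, P t * (deriv g (u t) * v t * w t + g (u t) * z t) ≤
      P y * (g (u y) * w y) - P x * (g (u x) * w x) := by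
    refine integral_mul_deriv_le_of_monotoneOn h.sol.le hP (fun t ht =>
      (((hg.differentiable one_ne_zero (u t)).hasDerivAt).comp t (h.sol.hasDerivAt t ht)).mul
        (h.lin.hasDerivAt t ht)) ?_ hw
    exact ((((hg.continuous_deriv le_rfl).comp_continuousOn h.sol.continuousOn).mul
      h.sol.continuousOn_deriv).mul h.lin.continuousOn).add
      ((hg.continuous.comp_continuousOn h.sol.continuousOn).mul h.lin.continuousOn_deriv)
  have hneg : ∫ r in x..y, (-P r * g (u r) * z r + v r * (-P r * deriv g (u r) * w r)) =
      -∫ t in x..y, P t * (deriv g (u t) * v t * w t + g (u t) * z t) := by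
    rw [← intervalIntegral.integral_neg]
    congr 1 with r
    ring
  linarith

end IsSolutionPair

section DirichletNondegeneracy

variable {σ τ α β : ℝ} {P g u v w z : ℝ → ℝ}

lemma IsSymmUnimodal.exists_nonpos_of_zeros_left_half (hP : IsSymmUnimodal σ τ P)
    (hg : IsSuperlinear g) (h : IsSolutionPair σ τ (fun t => -P t) g u v w z)
    (hu : ∀ t ∈ Ioo σ τ, 0 < u t) (hσ : u σ = 0) (hα : σ ≤ α) (hαβ : α < β) (hβ : β ≤ (σ + τ) / 2)
    (hwα : w α = 0) (hwβ : w β = 0) : ∃ t ∈ Ioo α β, w t ≤ 0 := by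
  by_contra! hw
  have hu0 := nonneg_on_Icc_of_pos_on_Ioo hP.lt.ne h.sol.continuousOn hu
  have hlin := h.lin.mono hα hαβ.le (by linarith [hP.lt])
  have hsub : Icc α β ⊆ Icc σ τ := Icc_subset_Icc hα (by linarith [hP.lt])
  have hw0 := nonneg_on_Icc_of_pos_on_Ioo hαβ.ne hlin.continuousOn hw
  have hconc : ∀ᵐ r ∂volume.restrict (Icc α β), -P r * deriv g (u r) * w r ≤ 0 :=
    ae_restrict_of_forall_mem measurableSet_Icc fun r hr => by
      linarith [mul_nonneg (mul_nonneg (hP.nonneg r (hsub hr))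
        (hg.deriv_nonneg (hu0 r (hsub hr)))) (hw0 r hr)]
  have hmid : (α + β) / 2 ∈ Ioo α β := ⟨by linarith, by linarith⟩
  have hzα : 0 < z α := by
    have htan := hlin.le_add_mul_sub hconc hlin.left_mem (Ioo_subset_Icc_self hmid)
    nlinarith [hw _ hmid]
  have hzβ : z β ≤ 0 := by
    have htan := hlin.le_add_mul_sub hconc hlin.right_mem (Ioo_subset_Icc_self hmid)
    nlinarith [hw _ hmid]
  have hg0 := hg.nonneg le_rfl
  have hvα : 0 < v α :=
    hP.deriv_pos_of_lt_midpoint hg.monotoneOn hg0 h.sol hu hσ ⟨hα, hαβ.trans_le hβ⟩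
  have hvβ : 0 ≤ v β :=
    hP.deriv_nonneg_of_le_midpoint hg.monotoneOn hg0 h.sol hu hσ ⟨hα.trans hαβ.le, hβ⟩
  have hslopes := (h.mono hα hαβ.le (by linarith [hP.lt])).sub_le_deriv_mul_deriv_sub hg.contDiff
    (hP.monotoneOn.mono (Icc_subset_Icc hα hβ))
    fun t ht => mul_nonneg (hg.nonneg (hu0 t (hsub ht))) (hw0 t ht)
  rw [hwα, hwβ] at hslopes
  nlinarith [mul_pos hvα hzα, mul_nonneg hvβ (neg_nonneg.2 hzβ)]

lemma IsSymmUnimodal.eqOn_zero_of_zeros_left_half (hP : IsSymmUnimodal σ τ P) (hg : IsSuperlinear g)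
    (h : IsSolutionPair σ τ (fun t => -P t) g u v w z) (hu : ∀ t ∈ Ioo σ τ, 0 < u t)
    (hσ : u σ = 0) (hα : α ≤ (σ + τ) / 2) (hwσ : w σ = 0) (hwα : w α = 0) :
    ∀ t ∈ Icc σ α, w t = 0 := by
  have hατ : α ≤ τ := by linarith [hP.lt]
  have hnonpos : ∀ {w z : ℝ → ℝ}, IsSolutionPair σ τ (fun t => -P t) g u v w z → w σ = 0 →
      w α = 0 → ∀ t ∈ Icc σ α, w t ≤ 0 := by
    intro w z h hwσ hwα t ht
    by_contra! hwt
    obtain ⟨s, s', hs, hst, hts', hs', hws, hws', hpos⟩ := exists_zeros_pos_on_Ioo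
      (h.lin.continuousOn.mono (Icc_subset_Icc le_rfl hατ)) hwσ hwα ht hwt
    obtain ⟨r, hr, hwr⟩ := hP.exists_nonpos_of_zeros_left_half hg h hu hσ hs (hst.trans hts')
      (hs'.trans hα) hws hws'
    exact hwr.not_gt (hpos r hr)
  exact fun t ht => le_antisymm (hnonpos h hwσ hwα t ht)
    (neg_nonpos.1 (hnonpos h.neg_lin (by simp [hwσ]) (by simp [hwα]) t ht))

lemma IsSymmUnimodal.eqOn_zero_of_zeros_right_half (hP : IsSymmUnimodal σ τ P)
    (hg : IsSuperlinear g) (h : IsSolutionPair σ τ (fun t => -P t) g u v w z)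
    (hu : ∀ t ∈ Ioo σ τ, 0 < u t) (hτ : u τ = 0) (hβ : (σ + τ) / 2 ≤ β) (hwβ : w β = 0)
    (hwτ : w τ = 0) :
    ∀ t ∈ Icc β τ, w t = 0 := by
  have hrefl := h.reflect
  simp only [hP.symm] at hrefl
  intro t ht
  have hzero := hP.eqOn_zero_of_zeros_left_half (α := σ + τ - β) hg hrefl
    (fun r hr => hu _ ⟨by linarith [hr.2], by linarith [hr.1]⟩)
    (by rwa [add_sub_cancel_left]) (by linarith) (by rwa [add_sub_cancel_left])
    (by rwa [sub_sub_cancel]) (σ + τ - t) ⟨by linarith [ht.2], by linarith [ht.1]⟩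
  rwa [sub_sub_cancel] at hzero

lemma IsSymmUnimodal.midpoint_nonpos_of_dirichlet (hP : IsSymmUnimodal σ τ P) (hg : IsSuperlinear g)
    (h : IsSolutionPair σ τ (fun t => -P t) g u v w z) (hu : ∀ t ∈ Ioo σ τ, 0 < u t)
    (hσ : u σ = 0) (hτ : u τ = 0) (hwσ : w σ = 0) (hwτ : w τ = 0) : w ((σ + τ) / 2) ≤ 0 := by
  by_contra! hwm
  have hm : (σ + τ) / 2 ∈ Icc σ τ := ⟨by linarith [hP.lt], by linarith [hP.lt]⟩
  obtain ⟨α, β, hα, hαm, hmβ, -, hwα, hwβ, hpos⟩ :=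
    exists_zeros_pos_on_Ioo h.lin.continuousOn hwσ hwτ hm hwm
  have hw0 : ∀ t ∈ Icc σ τ, 0 ≤ w t := fun t ht => by
    rcases le_or_gt t α with htα | hαt
    · exact (hP.eqOn_zero_of_zeros_left_half hg h hu hσ hαm.le hwσ hwα t ⟨ht.1, htα⟩).ge
    rcases le_or_gt β t with hβt | htβ
    · exact (hP.eqOn_zero_of_zeros_right_half hg h hu hτ hmβ.le hwβ hwτ t ⟨hβt, ht.2⟩).ge
    · exact (hpos t ⟨hαt, htβ⟩).le
  have hu0 := nonneg_on_Icc_of_pos_on_Ioo hP.lt.ne h.sol.continuousOn hu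
  obtain ⟨c, hc, hPc⟩ := hP.exists_pos
  obtain ⟨hint, hgreen⟩ := h.integral_weight_mul_eq_wronskian_sub
  have hneg : ∀ r, -P r * (deriv g (u r) * u r - g (u r)) * w r =
      -(P r * (deriv g (u r) * u r - g (u r)) * w r) := fun r => by ring
  have hint' : IntervalIntegrable (fun r => P r * (deriv g (u r) * u r - g (u r)) * w r)
      volume σ τ :=
    hint.neg.congr fun r _ => by simp only [Pi.neg_apply, hneg, neg_neg]
  simp only [hneg, hσ, hτ, hwσ, hwτ] at hgreen
  have hgain := integral_pos_of_pos_on_Ioo (hα.trans (le_max_right c α)) (max_lt hc.2 hαm)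
    hm.2 hint'
    (fun t ht => mul_nonneg (mul_nonneg (hP.nonneg t ht)
      (sub_nonneg.2 (hg.le_deriv_mul (hu0 t ht)))) (hw0 t ht))
    (fun t ht => by
      have hct : c < t := (le_max_left c α).trans_lt ht.1
      have hαt : α < t := (le_max_right c α).trans_lt ht.1
      have hPt : P c ≤ P t := hP.le_of_add_le hc.1.le hct.le (by linarith [hc.2, ht.2])
      have hut := hu t ⟨hα.trans_lt hαt, ht.2.trans_le hm.2⟩
      exact mul_pos (mul_pos (hPc.trans_le hPt) (sub_pos.2 (hg.lt_deriv_mul _ hut)))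
        (hpos t ⟨hαt, ht.2.trans hmβ⟩))
  rw [intervalIntegral.integral_neg] at hgreen
  linarith

theorem IsSymmUnimodal.eqOn_zero_of_dirichlet (hP : IsSymmUnimodal σ τ P) (hg : IsSuperlinear g)
    (h : IsSolutionPair σ τ (fun t => -P t) g u v w z) (hu : ∀ t ∈ Ioo σ τ, 0 < u t)
    (hσ : u σ = 0) (hτ : u τ = 0) (hwσ : w σ = 0) (hwτ : w τ = 0) :
    ∀ t ∈ Icc σ τ, w t = 0 := by
  have hmid : w ((σ + τ) / 2) = 0 :=
    le_antisymm (hP.midpoint_nonpos_of_dirichlet hg h hu hσ hτ hwσ hwτ)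
      (neg_nonpos.1 (hP.midpoint_nonpos_of_dirichlet hg h.neg_lin hu hσ hτ
        (by simp [hwσ]) (by simp [hwτ])))
  intro t ht
  rcases le_total t ((σ + τ) / 2) with htm | hmt
  · exact hP.eqOn_zero_of_zeros_left_half hg h hu hσ le_rfl hwσ hmid t ⟨ht.1, htm⟩
  · exact hP.eqOn_zero_of_zeros_right_half hg h hu hτ le_rfl hmid hwτ t ⟨hmt, ht.2⟩

end DirichletNondegeneracy

/-! ### A priori bounds -/

section AprioriBound

variable {x y σ τ c s t : ℝ} {P f g u v : ℝ → ℝ}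

lemma IsSecondPrimitive.mul_le_mul_of_nonpos (h : IsSecondPrimitive x y f u v)
    (hf : ∀ᵐ r ∂volume.restrict (Icc x y), f r ≤ 0) (hu : ∀ r ∈ Icc x y, 0 ≤ u r)
    (hs : s ∈ Icc x y) (hc : x ≤ c) (ht : t ∈ Icc c (x + y - c)) :
    (c - x) * u s ≤ (y - x) * u t := by
  have ht' : t ∈ Icc x y := ⟨hc.trans ht.1, by linarith [ht.2]⟩
  have htan := fun {r} (hr : r ∈ Icc x y) => h.le_add_mul_sub hf ht' hr
  have hus := hu s hs
  have hut := hu t ht'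
  rcases le_total t s with hts | hst
  · calc (c - x) * u s ≤ (t - x) * u s := by gcongr; exact ht.1
      _ ≤ (s - x) * u t := by
          nlinarith [mul_le_mul_of_nonneg_left (htan hs) (sub_nonneg.2 ht'.1),
            mul_le_mul_of_nonneg_left (htan h.left_mem) (sub_nonneg.2 hts),
            mul_nonneg (hu x h.left_mem) (sub_nonneg.2 hts)]
      _ ≤ (y - x) * u t := by gcongr; exact hs.2
  · calc (c - x) * u s ≤ (y - t) * u s := mul_le_mul_of_nonneg_right (by linarith [ht.2]) hus
      _ ≤ (y - s) * u t := by
          nlinarith [mul_le_mul_of_nonneg_left (htan hs) (sub_nonneg.2 ht'.2),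
            mul_le_mul_of_nonneg_left (htan h.right_mem) (sub_nonneg.2 hst),
            mul_nonneg (hu y h.right_mem) (sub_nonneg.2 hst)]
      _ ≤ (y - x) * u t := by gcongr; exact hs.1

lemma IsSecondPrimitive.mul_le_deriv_sub (h : IsSecondPrimitive x y f u v) {C : ℝ}
    (hs : s ∈ Icc x y) (ht : t ∈ Icc x y) (hst : s ≤ t) (hf : ∀ r ∈ Icc s t, f r ≤ -C) :
    (t - s) * C ≤ v s - v t := by
  have hle := intervalIntegral.integral_mono_on hst
    (intervalIntegrable_of_mem_Icc h.intervalIntegrable hs ht) intervalIntegrable_const hf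
  rw [← h.sub_eq_integral s hs t ht, intervalIntegral.integral_const, smul_eq_mul] at hle
  linarith

lemma IsSymmUnimodal.neg_weight_mul_nonpos (hP : IsSymmUnimodal σ τ P) (hg : IsSuperlinear g)
    (hu : ∀ t ∈ Icc σ τ, 0 ≤ u t) :
    ∀ᵐ t ∂volume.restrict (Icc σ τ), -P t * g (u t) ≤ 0 :=
  ae_restrict_of_forall_mem measurableSet_Icc fun t ht => by
    linarith [mul_nonneg (hP.nonneg t ht) (hg.nonneg (hu t ht))]

lemma IsSymmUnimodal.weight_mul_apply_max_le (hP : IsSymmUnimodal σ τ P) (hg : IsSuperlinear g)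
    (hc : c ∈ Ioo σ ((σ + τ) / 2)) (h : IsSecondPrimitive σ τ (fun t => -P t * g (u t)) u v)
    (hu : ∀ t ∈ Icc σ τ, 0 ≤ u t) (hs : s ∈ Icc σ τ) (hmax : ∀ t ∈ Icc σ τ, u t ≤ u s) :
    (σ + τ - c - c) * (P c * g ((c - σ) / (τ - σ) * u s)) * (c - σ) ≤ 2 * u s := by
  have hconc := hP.neg_weight_mul_nonpos hg hu
  have hlt := hP.lt
  obtain ⟨hσc, hcm⟩ := hc
  have hcI : c ∈ Icc σ τ := ⟨hσc.le, by linarith⟩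
  have hdI : σ + τ - c ∈ Icc σ τ := ⟨by linarith, by linarith⟩
  have hcd : c ≤ σ + τ - c := by linarith
  have hPc := hP.nonneg c hcI
  have hlower : ∀ t ∈ Icc c (σ + τ - c),
      P c * g ((c - σ) / (τ - σ) * u s) ≤ P t * g (u t) := fun t ht => by
    have hθ : 0 ≤ (c - σ) / (τ - σ) * u s :=
      mul_nonneg (div_nonneg (by linarith) (by linarith)) (hu s hs)
    have hut : (c - σ) / (τ - σ) * u s ≤ u t := by
      rw [div_mul_eq_mul_div, div_le_iff₀' (sub_pos.2 hlt)]
      exact h.mul_le_mul_of_nonpos hconc hu hs hσc.le ht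
    have hPt := hP.le_of_mem_Icc hσc.le ht
    exact mul_le_mul hPt (hg.monotoneOn hθ (hθ.trans hut) hut) (hg.nonneg hθ) (hPc.trans hPt)
  have hdrop := h.mul_le_deriv_sub hcI hdI hcd fun r hr => by
    rw [neg_mul]
    exact neg_le_neg (hlower r hr)
  have hvc := h.le_add_mul_sub hconc hcI h.left_mem
  have hvd := h.le_add_mul_sub hconc hdI h.right_mem
  nlinarith [mul_le_mul_of_nonneg_right hdrop (sub_nonneg.2 hσc.le), hu σ h.left_mem,
    hu τ h.right_mem, hmax c hcI, hmax _ hdI]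

theorem IsSymmUnimodal.eventually_forall_solution_le (hP : IsSymmUnimodal σ τ P)
    (hg : IsSuperlinear g) :
    ∀ᶠ R in atTop, ∀ u v, IsSecondPrimitive σ τ (fun t => -P t * g (u t)) u v →
      (∀ t ∈ Icc σ τ, 0 ≤ u t) → ∀ t ∈ Icc σ τ, u t ≤ R := by
  obtain ⟨c, hc, hPc⟩ := hP.exists_pos
  have hce : 0 < c - σ := sub_pos.2 hc.1
  have hl : 0 < τ - σ := sub_pos.2 hP.lt
  have hD : 0 < σ + τ - c - c := by linarith [hc.2]
  set θ := (c - σ) / (τ - σ)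
  have hθ0 : 0 < θ := div_pos hce hl
  have hlarge : ∀ᶠ R in atTop, 2 / ((σ + τ - c - c) * P c * θ * (c - σ)) < g (θ * R) / (θ * R) :=
    (hg.tendsto_div.comp (tendsto_id.const_mul_atTop hθ0)).eventually_gt_atTop _
  filter_upwards [eventually_forall_ge_atTop.2 hlarge, eventually_gt_atTop 0]
    with R hR hR0 u v h hu t ht
  obtain ⟨s, hs, hmax⟩ := isCompact_Icc.exists_isMaxOn ⟨σ, h.left_mem⟩ h.continuousOn
  refine (hmax ht).trans ?_
  by_contra! hRs
  have hus : 0 < u s := hR0.trans hRs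
  have hbig := hR (u s) hRs.le
  rw [div_lt_div_iff₀ (by positivity) (by positivity)] at hbig
  have hle := hP.weight_mul_apply_max_le hg hc h hu hs fun r hr => hmax hr
  nlinarith [mul_le_mul_of_nonneg_left hle hθ0.le]

lemma IsSecondPrimitive.abs_deriv_le (h : IsSecondPrimitive x y f u v) (hxy : x < y) {R : ℝ}
    {Q : ℝ → ℝ} (hR : ∀ t ∈ Icc x y, |u t| ≤ R) (hQ : IntervalIntegrable Q volume x y)
    (hf : ∀ t ∈ Icc x y, |f t| ≤ Q t) :
    ∀ t ∈ Icc x y, |v t| ≤ 2 * R / (y - x) + ∫ r in x..y, Q r := by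
  intro t ht
  obtain ⟨ξ, hξ, hvξ⟩ := exists_hasDerivAt_eq_slope u v hxy h.continuousOn
    fun r hr => h.hasDerivAt r (Ioo_subset_Icc_self hr)
  have hξI := Ioo_subset_Icc_self hξ
  have hslope : |v ξ| ≤ 2 * R / (y - x) := by
    rw [hvξ, abs_div, abs_of_pos (sub_pos.2 hxy)]
    gcongr
    linarith [abs_sub (u y) (u x), hR x h.left_mem, hR y h.right_mem]
  have hdiff : |v t - v ξ| ≤ ∫ r in x..y, Q r := by
    have hbound : ∀ {p q}, p ∈ Icc x y → q ∈ Icc x y → p ≤ q →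
        |v q - v p| ≤ ∫ r in x..y, Q r := fun {p q} hp hq hpq => by
      rw [h.sub_eq_integral p hp q hq]
      refine (intervalIntegral.norm_integral_le_of_norm_le (f := f) hpq (ae_of_all _ fun r hr =>
        hf r ⟨hp.1.trans hr.1.le, hr.2.trans hq.2⟩) (intervalIntegrable_of_mem_Icc hQ hp hq)).trans
        (intervalIntegral.integral_mono_interval hp.1 hpq hq.2 ?_ hQ)
      exact (ae_restrict_iff' measurableSet_Ioc).2
        (ae_of_all _ fun r hr => (abs_nonneg _).trans (hf r (Ioc_subset_Icc_self hr)))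
    rcases le_total ξ t with hξt | htξ
    · exact hbound hξI ht hξt
    · rw [abs_sub_comm]
      exact hbound ht hξI htξ
  linarith [abs_sub_abs_le_abs_sub (v t) (v ξ)]

end AprioriBound

/-! ### Boundary layers on the negativity intervals -/

namespace IsSecondPrimitive

variable {x y s t C R : ℝ} {f u v w z : ℝ → ℝ}

lemma mul_self (h : IsSecondPrimitive x y f w z) :
    IsSecondPrimitive x y (fun t => 2 * (z t * z t + w t * f t)) (fun t => w t * w t)
      (fun t => 2 * (w t * z t)) := by
  have hw := h.continuousOn
  have hz := h.continuousOn_deriv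
  rw [← uIcc_of_le h.le] at hw hz
  have hincr : ∀ s ∈ Icc x y, ∀ t ∈ Icc x y, s ≤ t →
      2 * (w t * z t) - 2 * (w s * z s) = ∫ r in s..t, 2 * (z r * z r + w r * f r) := by
    intro s hs t ht hst
    have h' := h.mono hs.1 hst ht.2
    rw [intervalIntegral.integral_const_mul, h'.integral_deriv_mul_deriv_add h']
    ring
  refine ⟨h.le, fun t ht => ((h.hasDerivAt t ht).fun_mul (h.hasDerivAt t ht)).congr_deriv (by ring),
    ((hz.mul hz).intervalIntegrable.add (h.intervalIntegrable.continuousOn_mul hw)).const_mul 2,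
    fun s hs t ht => ?_⟩
  rcases le_total s t with hst | hts
  · exact hincr s hs t ht hst
  · rw [intervalIntegral.integral_symm, ← hincr t ht s hs hts, neg_sub]

lemma neg_div_le_deriv (h : IsSecondPrimitive x y f u v)
    (hf : ∀ᵐ r ∂volume.restrict (Icc x y), 0 ≤ f r) (hs : s ∈ Ioc x y) (hus : 0 ≤ u s)
    (hux : u x ≤ R) : -(R / (s - x)) ≤ v s := by
  rw [neg_le, le_div_iff₀ (sub_pos.2 hs.1)]
  linarith [h.add_mul_sub_le hf (Ioc_subset_Icc_self hs) h.left_mem]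

lemma sub_mul_le_of_deriv_le (h : IsSecondPrimitive x y f u v)
    (hf : ∀ᵐ r ∂volume.restrict (Icc x y), 0 ≤ f r) (hs : s ∈ Icc x y) (hC : 0 ≤ C)
    (hvy : v y ≤ C) (ht : t ∈ Icc s y) : u y - C * (y - s) ≤ u t := by
  have htan := h.add_mul_sub_le hf h.right_mem ⟨hs.1.trans ht.1, ht.2⟩
  have hslope : v y * (y - t) ≤ C * (y - s) :=
    mul_le_mul hvy (sub_le_sub_left ht.1 y) (sub_nonneg.2 ht.2) hC
  linarith

end IsSecondPrimitive

/-- A nonnegative integrable weight on `[x, y]` which is nontrivial on every left neighborhood of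
`y`: the shape of `h⁻` just before a positivity interval. -/
structure IsBoundaryLayer (x y : ℝ) (q : ℝ → ℝ) : Prop where
  lt : x < y
  nonneg : ∀ t ∈ Icc x y, 0 ≤ q t
  intervalIntegrable : IntervalIntegrable q volume x y
  integral_pos : ∀ s ∈ Ico x y, 0 < ∫ t in s..y, q t

section BoundaryLayer

variable {x y s C R ε κ μ c : ℝ} {q k g u v w z : ℝ → ℝ}

lemma weight_mul_nonneg (hg : IsSuperlinear g) (hk : ∀ t ∈ Icc x y, 0 ≤ k t)
    (hu : ∀ t ∈ Icc x y, 0 ≤ u t) : ∀ᵐ t ∂volume.restrict (Icc x y), 0 ≤ k t * g (u t) :=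
  ae_restrict_of_forall_mem measurableSet_Icc fun t ht =>
    mul_nonneg (hk t ht) (hg.nonneg (hu t ht))

lemma exists_mem_Ioo_mul_sub_le (hxy : x < y) (hC : 0 < C) (hε : 0 < ε) :
    ∃ s ∈ Ioo x y, C * (y - s) ≤ ε := by
  refine ⟨max ((x + y) / 2) (y - ε / C),
    ⟨lt_max_of_lt_left (by linarith), max_lt (by linarith) (sub_lt_self _ (div_pos hε hC))⟩, ?_⟩
  calc C * (y - max ((x + y) / 2) (y - ε / C)) ≤ C * (ε / C) := by
        gcongr
        linarith [le_max_right ((x + y) / 2) (y - ε / C)]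
    _ = ε := mul_div_cancel₀ ε hC.ne'

lemma eventually_right_le (hq : IsBoundaryLayer x y q) (hg : IsSuperlinear g) (hC : 0 < C)
    (hε : 0 < ε) :
    ∀ᶠ μ in atTop, ∀ u v, IsSecondPrimitive x y (fun t => μ * q t * g (u t)) u v →
      (∀ t ∈ Icc x y, u t ∈ Icc 0 R) → v y ≤ C → u y ≤ ε := by
  obtain ⟨s, hs, hsε⟩ := exists_mem_Ioo_mul_sub_le hq.lt hC (half_pos hε)
  have hsI := Ioo_subset_Icc_self hs
  have hmass : 0 < g (ε / 2) * ∫ t in s..y, q t :=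
    mul_pos (hg.pos _ (half_pos hε)) (hq.integral_pos s (Ioo_subset_Ico_self hs))
  filter_upwards [eventually_gt_atTop 0,
    (tendsto_id.atTop_mul_const hmass).eventually_gt_atTop (C + R / (s - x))]
    with μ hμ hμ_large u v h hu hvy
  by_contra! huy
  have hconv := weight_mul_nonneg hg (fun t ht => mul_nonneg hμ.le (hq.nonneg t ht))
    fun t ht => (hu t ht).1
  have hvs := h.neg_div_le_deriv hconv (Ioo_subset_Ioc_self hs) (hu s hsI).1 (hu x h.left_mem).2
  have hgu : ∀ t ∈ Icc s y, g (ε / 2) ≤ g (u t) := fun t ht => by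
    have hut : ε / 2 ≤ u t := by linarith [h.sub_mul_le_of_deriv_le hconv hsI hC.le hvy ht]
    exact hg.monotoneOn (half_pos hε).le ((half_pos hε).le.trans hut) hut
  have hjump : μ * (g (ε / 2) * ∫ t in s..y, q t) ≤ v y - v s := by
    rw [h.sub_eq_integral s hsI y h.right_mem, ← intervalIntegral.integral_const_mul,
      ← intervalIntegral.integral_const_mul]
    refine intervalIntegral.integral_mono_on hs.2.le
      (((intervalIntegrable_of_mem_Icc hq.intervalIntegrable hsI h.right_mem).const_mul _).const_mul
        _)
      (intervalIntegrable_of_mem_Icc h.intervalIntegrable hsI h.right_mem) fun t ht => ?_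
    have hqt := mul_nonneg hμ.le (hq.nonneg t ⟨hs.1.le.trans ht.1, ht.2⟩)
    linarith [mul_le_mul_of_nonneg_left (hgu t ht) hqt]
  simp only [id] at hμ_large
  linarith

-- Since `g(u) ≤ g'(u) u`, the slope of `w²` grows at least as fast as a multiple of that of `u`.
lemma IsSolutionPair.mul_deriv_sub_le (h : IsSolutionPair x y k g u v w z) (hg : IsSuperlinear g)
    (hk : ∀ t ∈ Icc x y, 0 ≤ k t) (hu : ∀ t ∈ Icc x y, u t ∈ Icc 0 R) (hκ : 0 ≤ κ)
    (hw : ∀ t ∈ Icc x y, κ ≤ w t * w t) :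
    κ * (v y - v x) ≤ R * (w y * z y - w x * z x) := by
  have hsq := h.lin.mul_self
  have hsq_eq := hsq.sub_eq_integral x hsq.left_mem y hsq.right_mem
  have hle : ∫ t in x..y, 2 * κ * (k t * g (u t)) ≤
      ∫ t in x..y, R * (2 * (z t * z t + w t * (k t * deriv g (u t) * w t))) := by
    refine intervalIntegral.integral_mono_on h.sol.le (h.sol.intervalIntegrable.const_mul _)
      (hsq.intervalIntegrable.const_mul _) fun t ht => ?_
    have hR : 0 ≤ R := (hu t ht).1.trans (hu t ht).2
    have hdg := hg.deriv_nonneg (hu t ht).1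
    have hkt := hk t ht
    calc 2 * κ * (k t * g (u t)) ≤ 2 * κ * (k t * (deriv g (u t) * R)) := by
          gcongr
          exact (hg.le_deriv_mul (hu t ht).1).trans (mul_le_mul_of_nonneg_left (hu t ht).2 hdg)
      _ = 2 * (k t * deriv g (u t) * R) * κ := by ring
      _ ≤ 2 * (k t * deriv g (u t) * R) * (w t * w t) := by
          gcongr
          exact hw t ht
      _ ≤ R * (2 * (z t * z t + w t * (k t * deriv g (u t) * w t))) := by
          nlinarith [mul_nonneg hR (mul_self_nonneg (z t))]
  rw [intervalIntegral.integral_const_mul, intervalIntegral.integral_const_mul, ← hsq_eq,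
    ← h.sol.sub_eq_integral x h.sol.left_mem y h.sol.right_mem] at hle
  linarith

lemma IsSecondPrimitive.exists_deriv_eq_half {f : ℝ → ℝ} (h : IsSecondPrimitive x y f u v)
    (hf : ∀ᵐ r ∂volume.restrict (Icc x y), 0 ≤ f r) (hu : ∀ t ∈ Icc x y, 0 ≤ u t) (hs : s ∈ Ico x y)
    (hc : 0 < c) (hvy : c ≤ v y) (huy : u y ≤ c * (y - s) / 2) :
    ∃ r ∈ Icc s y, v r = c / 2 ∧ ∀ t ∈ Icc r y, u t ≤ u y := by
  have hsI := Ico_subset_Icc_self hs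
  have hvs : v s ≤ c / 2 := by
    have htan := h.add_mul_sub_le hf hsI h.right_mem
    have hsy := sub_pos.2 hs.2
    nlinarith [hu s hsI]
  obtain ⟨r, hr, hvr⟩ := intermediate_value_Icc hs.2.le
    (h.continuousOn_deriv.mono (Icc_subset_Icc hs.1 le_rfl)) ⟨hvs, by linarith⟩
  refine ⟨r, hr, hvr, fun t ht => ?_⟩
  have hrI : r ∈ Icc x y := ⟨hs.1.trans hr.1, hr.2⟩
  have htI : t ∈ Icc x y := ⟨hrI.1.trans ht.1, ht.2⟩
  have hvt := h.monotoneOn_deriv hf hrI htI ht.1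
  nlinarith [h.add_mul_sub_le hf htI h.right_mem, sub_nonneg.2 ht.2]

lemma mul_self_add_weight_mul_nonneg (hg : IsSuperlinear g) (hk : ∀ t ∈ Icc x y, 0 ≤ k t)
    (hu : ∀ t ∈ Icc x y, 0 ≤ u t) :
    ∀ᵐ t ∂volume.restrict (Icc x y),
      0 ≤ 2 * (z t * z t + w t * (k t * deriv g (u t) * w t)) :=
  ae_restrict_of_forall_mem measurableSet_Icc fun t ht => by
    nlinarith [mul_self_nonneg (z t), mul_nonneg (mul_nonneg (hk t ht)
      (hg.deriv_nonneg (hu t ht))) (mul_self_nonneg (w t))]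

lemma IsSolutionPair.sq_mul_le_of_lt_abs (h : IsSolutionPair x y k g u v w z)
    (hg : IsSuperlinear g) (hk : ∀ t ∈ Icc x y, 0 ≤ k t) (hu : ∀ t ∈ Icc x y, 0 ≤ u t)
    (hw : ∀ t ∈ Icc x y, |w t| ≤ 1) (hC : 0 ≤ C) (hzy : |z y| ≤ C) (hs : s ∈ Ioo x y)
    (hε : 0 ≤ ε) (hsε : 2 * C * (y - s) ≤ ε ^ 2 / 2) (hc : 0 < c) (hvy : c ≤ v y)
    (huy : u y ≤ c * (y - s) / 2) (hwy : ε < |w y|) :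
    ε ^ 2 * c ≤ 2 * (2 * C + 1 / (s - x)) * u y := by
  have hsq := h.lin.mul_self
  have hsq_conv := mul_self_add_weight_mul_nonneg (w := w) (z := z) hg hk hu
  have hsq_le : w x * w x ≤ 1 := by
    rw [← abs_mul_abs_self]
    exact mul_le_one₀ (hw x hsq.left_mem) (abs_nonneg _) (hw x hsq.left_mem)
  have hslope_y : 2 * (w y * z y) ≤ 2 * C := by
    have hle := (le_abs_self _).trans_eq (abs_mul (w y) (z y))
    linarith [mul_le_mul (hw y hsq.right_mem) hzy (abs_nonneg _) zero_le_one]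
  have hslope_s := hsq.neg_div_le_deriv hsq_conv (Ioo_subset_Ioc_self hs) (mul_self_nonneg _) hsq_le
  obtain ⟨r, hr, hvr, hur⟩ := h.sol.exists_deriv_eq_half (weight_mul_nonneg hg hk hu) hu
    (Ioo_subset_Ico_self hs) hc hvy huy
  have hrI : r ∈ Icc x y := ⟨hs.1.le.trans hr.1, hr.2⟩
  have hsub : Icc r y ⊆ Icc x y := Icc_subset_Icc hrI.1 le_rfl
  have hw_large : ∀ t ∈ Icc r y, ε ^ 2 / 2 ≤ w t * w t := fun t ht => by
    have hwy2 : ε ^ 2 ≤ w y * w y := by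
      rw [← abs_mul_abs_self, ← sq]
      gcongr
    linarith [hsq.sub_mul_le_of_deriv_le hsq_conv (Ioo_subset_Icc_self hs)
      (mul_nonneg zero_le_two hC) hslope_y ⟨hr.1.trans ht.1, ht.2⟩]
  have henergy := (h.mono hrI.1 hr.2 le_rfl).mul_deriv_sub_le hg (fun t ht => hk t (hsub ht))
    (fun t ht => ⟨hu t (hsub ht), hur t ht⟩) (by positivity) hw_large
  have hslope_r := hsq.monotoneOn_deriv hsq_conv (Ioo_subset_Icc_self hs) hrI hr.1
  have hslopes : 2 * (w y * z y - w r * z r) ≤ 2 * C + 1 / (s - x) := by linarith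
  nlinarith [mul_le_mul_of_nonneg_left hslopes (hu y hsq.right_mem),
    mul_nonneg (sq_nonneg ε) (sub_nonneg.2 hvy)]

lemma exists_forall_abs_right_le (hxy : x < y) (hg : IsSuperlinear g) (hC : 0 < C) (hc : 0 < c)
    (hε : 0 < ε) :
    ∃ η > 0, ∀ k u v w z, IsSolutionPair x y k g u v w z → (∀ t ∈ Icc x y, 0 ≤ k t) →
      (∀ t ∈ Icc x y, 0 ≤ u t) → (∀ t ∈ Icc x y, |w t| ≤ 1) → c ≤ v y → u y ≤ η →
      |z y| ≤ C → |w y| ≤ ε := by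
  obtain ⟨s, hs, hsε⟩ := exists_mem_Ioo_mul_sub_le hxy (mul_pos two_pos hC)
    (half_pos (sq_pos_of_pos hε))
  have hsx := sub_pos.2 hs.1
  have hsy := sub_pos.2 hs.2
  refine ⟨min (c * (y - s) / 2) (ε ^ 2 * c / (2 * (2 * (2 * C + 1 / (s - x))))), by positivity,
    fun k u v w z h hk hu hw hvy huη hzy => ?_⟩
  by_contra! hwy
  have hle := h.sq_mul_le_of_lt_abs hg hk hu hw hC.le hzy hs hε.le hsε hc hvy
    (huη.trans (min_le_left _ _)) hwy
  have huD := huη.trans (min_le_right _ _)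
  rw [le_div_iff₀ (by positivity)] at huD
  have hεc : 0 < ε ^ 2 * c := by positivity
  linarith

end BoundaryLayer

/-! ### Compactness of solution pairs -/

section Compactness

variable {x y A C K R : ℝ} {u v f φ : ℕ → ℝ → ℝ} {F U Q Φ : ℝ → ℝ}

lemma exists_subseq_tendsto_of_abs_sub_le {X : Type*} [PseudoMetricSpace X] {S : Set X}
    (hS : IsCompact S) {u : ℕ → X → ℝ} (hR : ∀ n, ∀ t ∈ S, |u n t| ≤ R)
    (hK : ∀ n, ∀ s ∈ S, ∀ t ∈ S, |u n t - u n s| ≤ K * dist t s) :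
    ∃ (φ : ℕ → ℕ) (U : X → ℝ), StrictMono φ ∧
      ∀ t ∈ S, Tendsto (fun n => u (φ n) t) atTop (𝓝 (U t)) := by
  have : CompactSpace S := isCompact_iff_compactSpace.1 hS
  have hmodulus : Tendsto (fun r => K * r) (𝓝 0) (𝓝 0) := by
    simpa using (continuous_const_mul K).tendsto 0
  have hcont : ∀ n, Continuous fun t : S => u n t := fun n =>
    (LipschitzWith.of_dist_le' (K := K) fun s t => by
      rw [Real.dist_eq]
      exact hK n t t.2 s s.2).continuous
  let v : ℕ → BoundedContinuousFunction S ℝ := fun n =>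
    BoundedContinuousFunction.mkOfCompact ⟨fun t => u n t, hcont n⟩
  have hcompact := BoundedContinuousFunction.arzela_ascoli (Icc (-R) R) isCompact_Icc (range v)
    (by rintro _ t ⟨n, rfl⟩; exact abs_le.1 (hR n t t.2))
    (Metric.equicontinuous_of_continuity_modulus _ hmodulus _ (by
      rintro s t ⟨_, n, rfl⟩
      exact hK n t t.2 s s.2))
  obtain ⟨V, -, φ, hφ, hV⟩ := hcompact.tendsto_subseq fun n => subset_closure (mem_range_self n)
  classical
  refine ⟨φ, fun t => if ht : t ∈ S then V ⟨t, ht⟩ else 0, hφ, fun t ht => ?_⟩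
  simp only [dif_pos ht]
  exact tendsto_pi_nhds.1 ((BoundedContinuousFunction.continuous_coe.tendsto V).comp hV) ⟨t, ht⟩

lemma exists_isSecondPrimitive (hxy : x ≤ y) (hF : IntervalIntegrable F volume x y) (u₀ v₀ : ℝ) :
    ∃ u v, IsSecondPrimitive x y F u v ∧ u x = u₀ ∧ v x = v₀ := by
  have hind : Integrable ((Ioc x y).indicator F) :=
    (integrable_indicator_iff measurableSet_Ioc).2
      ((intervalIntegrable_iff_integrableOn_Ioc_of_le hxy).1 hF)
  set v : ℝ → ℝ := fun t => v₀ + ∫ r in x..t, (Ioc x y).indicator F r with hv_def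
  have hv : Continuous v := continuous_const.add
    (intervalIntegral.continuous_primitive (fun _ _ => hind.intervalIntegrable) x)
  have hprim : IsSecondPrimitive x y ((Ioc x y).indicator F)
      (fun t => u₀ + ∫ r in x..t, v r) v := by
    refine ⟨hxy, fun t _ => (intervalIntegral.integral_hasDerivAt_right (hv.intervalIntegrable x t)
      hv.aestronglyMeasurable.stronglyMeasurableAtFilter hv.continuousAt).const_add u₀,
      hind.intervalIntegrable, fun s _ t _ => ?_⟩
    rw [← intervalIntegral.integral_interval_sub_left (a := x) hind.intervalIntegrable
      hind.intervalIntegrable, add_sub_add_left_eq_sub]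
  refine ⟨_, v, hprim.congr_ae ?_, by simp, by simp [hv_def]⟩
  rw [← Measure.restrict_congr_set Ioc_ae_eq_Icc]
  exact ae_restrict_of_forall_mem measurableSet_Ioc fun t ht => indicator_of_mem ht F

lemma intervalIntegrable_of_tendsto_of_abs_le (hxy : x ≤ y) (hQ : IntervalIntegrable Q volume x y)
    (hf : ∀ n, IntervalIntegrable (f n) volume x y) (hfQ : ∀ n, ∀ t ∈ Icc x y, |f n t| ≤ Q t)
    (hF : ∀ t ∈ Icc x y, Tendsto (fun n => f n t) atTop (𝓝 (F t))) :
    IntervalIntegrable F volume x y := by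
  rw [intervalIntegrable_iff_integrableOn_Icc_of_le hxy] at hQ ⊢
  refine hQ.mono' (aestronglyMeasurable_of_tendsto_ae atTop (fun n =>
    ((intervalIntegrable_iff_integrableOn_Icc_of_le hxy).1 (hf n)).aestronglyMeasurable)
    (ae_restrict_of_forall_mem measurableSet_Icc hF)) ?_
  exact ae_restrict_of_forall_mem measurableSet_Icc fun t ht =>
    le_of_tendsto (hF t ht).abs (Eventually.of_forall fun n => hfQ n t ht)

lemma tendsto_of_sub_eq_integral (hφ : ∀ n, ∀ t ∈ Icc x y, φ n t - φ n x = ∫ r in x..t, f n r)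
    (hΦ : ∀ t ∈ Icc x y, Φ t - Φ x = ∫ r in x..t, F r)
    (hf : ∀ n, IntervalIntegrable (f n) volume x y) (hQ : IntervalIntegrable Q volume x y)
    (hfQ : ∀ n, ∀ t ∈ Icc x y, |f n t| ≤ Q t)
    (hF : ∀ t ∈ Icc x y, Tendsto (fun n => f n t) atTop (𝓝 (F t)))
    (hx : Tendsto (fun n => φ n x) atTop (𝓝 (Φ x))) :
    ∀ t ∈ Icc x y, Tendsto (fun n => φ n t) atTop (𝓝 (Φ t)) := by
  intro t ht
  have hxI : x ∈ Icc x y := left_mem_Icc.2 (ht.1.trans ht.2)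
  have hsub : ∀ r ∈ uIoc x t, r ∈ Icc x y := fun r hr => by
    rw [uIoc_of_le ht.1] at hr
    exact ⟨hr.1.le, hr.2.trans ht.2⟩
  have hint : Tendsto (fun n => ∫ r in x..t, f n r) atTop (𝓝 (∫ r in x..t, F r)) :=
    intervalIntegral.tendsto_integral_filter_of_dominated_convergence Q
      (Eventually.of_forall fun n =>
        (intervalIntegrable_of_mem_Icc (hf n) hxI ht).aestronglyMeasurable_restrict_uIoc)
      (Eventually.of_forall fun n => ae_of_all _ fun r hr => hfQ n r (hsub r hr))
      (intervalIntegrable_of_mem_Icc hQ hxI ht) (ae_of_all _ fun r hr => hF r (hsub r hr))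
  have hsum := hint.add hx
  rw [← hΦ t ht, sub_add_cancel] at hsum
  refine hsum.congr fun n => ?_
  rw [← hφ n t ht, sub_add_cancel]

lemma IsSecondPrimitive.exists_subseq_tendsto (hxy : x ≤ y)
    (h : ∀ n, IsSecondPrimitive x y (f n) (u n) (v n)) (hu : ∀ n, ∀ t ∈ Icc x y, |u n t| ≤ R)
    (hv : ∀ n, ∀ t ∈ Icc x y, |v n t| ≤ C) :
    ∃ (φ : ℕ → ℕ) (U : ℝ → ℝ) (A : ℝ), StrictMono φ ∧
      (∀ t ∈ Icc x y, Tendsto (fun n => u (φ n) t) atTop (𝓝 (U t))) ∧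
      Tendsto (fun n => v (φ n) x) atTop (𝓝 A) := by
  obtain ⟨φ, U, hφ, hU⟩ := exists_subseq_tendsto_of_abs_sub_le isCompact_Icc hu fun n s hs t ht =>
    (convex_Icc x y).norm_image_sub_le_of_norm_hasDerivWithin_le
      (fun r hr => ((h n).hasDerivAt r hr).hasDerivWithinAt) (hv n) hs ht
  obtain ⟨A, -, ψ, hψ, hA⟩ := isCompact_Icc.tendsto_subseq
    fun n => abs_le.1 (hv (φ n) x (left_mem_Icc.2 hxy))
  exact ⟨φ ∘ ψ, U, A, hφ.comp hψ, fun t ht => (hU t ht).comp hψ.tendsto_atTop, hA⟩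

lemma IsSecondPrimitive.exists_of_tendsto (hxy : x ≤ y)
    (h : ∀ n, IsSecondPrimitive x y (f n) (u n) (v n)) (hv : ∀ n, ∀ t ∈ Icc x y, |v n t| ≤ C)
    (hQ : IntervalIntegrable Q volume x y) (hfQ : ∀ n, ∀ t ∈ Icc x y, |f n t| ≤ Q t)
    (hF : ∀ t ∈ Icc x y, Tendsto (fun n => f n t) atTop (𝓝 (F t)))
    (hU : ∀ t ∈ Icc x y, Tendsto (fun n => u n t) atTop (𝓝 (U t)))
    (hA : Tendsto (fun n => v n x) atTop (𝓝 A)) :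
    ∃ u₀ v₀ : ℝ → ℝ, IsSecondPrimitive x y F u₀ v₀ ∧ (∀ t ∈ Icc x y, u₀ t = U t) ∧
      ∀ t ∈ Icc x y, Tendsto (fun n => v n t) atTop (𝓝 (v₀ t)) := by
  obtain ⟨u₀, v₀, h₀, hu₀, hv₀⟩ := exists_isSecondPrimitive hxy
    (intervalIntegrable_of_tendsto_of_abs_le hxy hQ (fun n => (h n).intervalIntegrable) hfQ hF)
    (U x) A
  have hvlim := tendsto_of_sub_eq_integral
    (fun n t ht => (h n).sub_eq_integral x (h n).left_mem t ht)
    (fun t ht => h₀.sub_eq_integral x h₀.left_mem t ht) (fun n => (h n).intervalIntegrable) hQ hfQ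
    hF (by rwa [hv₀])
  have hulim := tendsto_of_sub_eq_integral
    (fun n t ht => (h n).sub_eq_integral_deriv (h n).left_mem ht)
    (fun t ht => h₀.sub_eq_integral_deriv h₀.left_mem ht)
    (fun n => (h n).deriv_intervalIntegrable) intervalIntegrable_const hv hvlim
    (by rw [hu₀]; exact hU x h₀.left_mem)
  exact ⟨u₀, v₀, h₀, fun t ht => tendsto_nhds_unique (hulim t ht) (hU t ht), hvlim⟩

end Compactness

lemma exists_abs_weight_mul_le {g : ℝ → ℝ} (hg : ContDiff ℝ 1 g) (R : ℝ) :
    ∃ M, ∀ p s r : ℝ, |s| ≤ R → |r| ≤ 1 →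
      |p * g s| ≤ M * |p| ∧ |p * deriv g s * r| ≤ M * |p| := by
  obtain ⟨M₁, hM₁⟩ := isCompact_Icc.exists_bound_of_continuousOn
    (hg.continuous.continuousOn (s := Icc (-R) R))
  obtain ⟨M₂, hM₂⟩ := isCompact_Icc.exists_bound_of_continuousOn
    ((hg.continuous_deriv le_rfl).continuousOn (s := Icc (-R) R))
  refine ⟨max M₁ M₂, fun p s r hs hr => ⟨?_, ?_⟩⟩
  · rw [abs_mul, mul_comm]
    gcongr
    exact (hM₁ s (abs_le.1 hs)).trans (le_max_left _ _)
  · rw [abs_mul, abs_mul, mul_comm |p|]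
    calc |deriv g s| * |p| * |r| ≤ |deriv g s| * |p| :=
          mul_le_of_le_one_right (by positivity) hr
      _ ≤ max M₁ M₂ * |p| := by
          gcongr
          exact (hM₂ s (abs_le.1 hs)).trans (le_max_right _ _)

namespace IsSolutionPair

variable {x y R : ℝ} {k g : ℝ → ℝ}

lemma exists_abs_deriv_le (hxy : x < y) (hk : IntervalIntegrable k volume x y)
    (hg : ContDiff ℝ 1 g) (R : ℝ) :
    ∃ C > 0, ∀ u v w z, IsSolutionPair x y k g u v w z → (∀ t ∈ Icc x y, |u t| ≤ R) →
      (∀ t ∈ Icc x y, |w t| ≤ 1) → ∀ t ∈ Icc x y, |v t| ≤ C ∧ |z t| ≤ C := by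
  obtain ⟨M, hM⟩ := exists_abs_weight_mul_le hg R
  have hQ := hk.abs.const_mul M
  refine ⟨max 1 (max (2 * R / (y - x) + ∫ r in x..y, M * |k r|)
    (2 * 1 / (y - x) + ∫ r in x..y, M * |k r|)), by positivity,
    fun u v w z h hu hw t ht => ⟨?_, ?_⟩⟩
  · exact le_max_of_le_right (le_max_of_le_left (h.sol.abs_deriv_le hxy hu hQ
      (fun r hr => (hM _ _ _ (hu r hr) (hw r hr)).1) t ht))
  · exact le_max_of_le_right (le_max_of_le_right (h.lin.abs_deriv_le hxy hw hQ
      (fun r hr => (hM _ _ _ (hu r hr) (hw r hr)).2) t ht))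

theorem exists_subseq_tendsto (hxy : x < y) (hk : IntervalIntegrable k volume x y)
    (hg : ContDiff ℝ 1 g) {u v w z : ℕ → ℝ → ℝ}
    (h : ∀ n, IsSolutionPair x y k g (u n) (v n) (w n) (z n))
    (hu : ∀ n, ∀ t ∈ Icc x y, |u n t| ≤ R) (hw : ∀ n, ∀ t ∈ Icc x y, |w n t| ≤ 1) :
    ∃ (φ : ℕ → ℕ) (U V W Z : ℝ → ℝ), StrictMono φ ∧ IsSolutionPair x y k g U V W Z ∧
      ∀ t ∈ Icc x y, Tendsto (fun n => u (φ n) t) atTop (𝓝 (U t)) ∧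
        Tendsto (fun n => v (φ n) t) atTop (𝓝 (V t)) ∧
        Tendsto (fun n => w (φ n) t) atTop (𝓝 (W t)) := by
  obtain ⟨C, -, hC⟩ := exists_abs_deriv_le hxy hk hg R
  obtain ⟨M, hM⟩ := exists_abs_weight_mul_le hg R
  have hQ := hk.abs.const_mul M
  obtain ⟨φ, U, A, hφ, hU, hA⟩ := IsSecondPrimitive.exists_subseq_tendsto hxy.le
    (fun n => (h n).sol) hu fun n t ht => (hC _ _ _ _ (h n) (hu n) (hw n) t ht).1
  obtain ⟨ψ, W, B, hψ, hW, hB⟩ := IsSecondPrimitive.exists_subseq_tendsto hxy.le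
    (fun n => (h (φ n)).lin) (fun n => hw (φ n))
    fun n t ht => (hC _ _ _ _ (h (φ n)) (hu _) (hw _) t ht).2
  have hUψ : ∀ t ∈ Icc x y, Tendsto (fun n => u (φ (ψ n)) t) atTop (𝓝 (U t)) :=
    fun t ht => (hU t ht).comp hψ.tendsto_atTop
  obtain ⟨U', V, hsol, hUU', hV⟩ := IsSecondPrimitive.exists_of_tendsto
    (F := fun t => k t * g (U t)) hxy.le (fun n => (h (φ (ψ n))).sol)
    (fun n t ht => (hC _ _ _ _ (h _) (hu _) (hw _) t ht).1) hQ
    (fun n t ht => (hM _ _ _ (hu _ t ht) (hw (φ (ψ n)) t ht)).1)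
    (fun t ht => ((hg.continuous.tendsto _).comp (hUψ t ht)).const_mul (k t)) hUψ
    (hA.comp hψ.tendsto_atTop)
  obtain ⟨W', Z, hlin, hWW', -⟩ := IsSecondPrimitive.exists_of_tendsto
    (F := fun t => k t * deriv g (U t) * W t) hxy.le (fun n => (h (φ (ψ n))).lin)
    (fun n t ht => (hC _ _ _ _ (h _) (hu _) (hw _) t ht).2) hQ
    (fun n t ht => (hM _ _ _ (hu _ t ht) (hw _ t ht)).2)
    (fun t ht => ((((hg.continuous_deriv le_rfl).tendsto _).comp (hUψ t ht)).const_mul (k t)).mul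
      (hW t ht)) hW hB
  refine ⟨φ ∘ ψ, U', V, W', Z, hφ.comp hψ, ⟨hsol.congr_ae ?_, hlin.congr_ae ?_⟩, fun t ht => ?_⟩
  · exact ae_restrict_of_forall_mem measurableSet_Icc fun t ht => by rw [hUU' t ht]
  · exact ae_restrict_of_forall_mem measurableSet_Icc fun t ht => by rw [hUU' t ht, hWW' t ht]
  · rw [hUU' t ht, hWW' t ht]
    exact ⟨hUψ t ht, hV t ht, hW t ht⟩

end IsSolutionPair

/-! ### The limit `μ → ∞` near one positivity interval -/

section BoundaryLayerLimit

variable {x y C R : ℝ} {μ : ℕ → ℝ} {q g : ℝ → ℝ} {u v w z : ℕ → ℝ → ℝ}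

lemma tendsto_right_zero (hq : IsBoundaryLayer x y q) (hg : IsSuperlinear g) (hC : 0 < C)
    (hμ : Tendsto μ atTop atTop)
    (h : ∀ n, IsSecondPrimitive x y (fun t => μ n * q t * g (u n t)) (u n) (v n))
    (hu : ∀ n, ∀ t ∈ Icc x y, u n t ∈ Icc 0 R) (hv : ∀ n, v n y ≤ C) :
    Tendsto (fun n => u n y) atTop (𝓝 0) := by
  rw [Metric.tendsto_atTop']
  intro ε hε
  obtain ⟨N, hN⟩ := eventually_atTop.1
    (hμ.eventually (eventually_right_le (R := R) hq hg hC (half_pos hε)))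
  refine ⟨N, fun n hn => ?_⟩
  rw [Real.dist_0_eq_abs, abs_of_nonneg (hu n y (h n).right_mem).1]
  exact (hN n hn.le _ _ (h n) (hu n) (hv n)).trans_lt (half_lt_self hε)

lemma tendsto_lin_right_zero (hq : IsBoundaryLayer x y q) (hg : IsSuperlinear g) (hC : 0 < C)
    (hμ : Tendsto μ atTop atTop)
    (h : ∀ n, IsSolutionPair x y (fun t => μ n * q t) g (u n) (v n) (w n) (z n))
    (hu : ∀ n, ∀ t ∈ Icc x y, 0 ≤ u n t) (hw : ∀ n, ∀ t ∈ Icc x y, |w n t| ≤ 1)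
    (hz : ∀ n, |z n y| ≤ C) {V : ℝ} (hV : 0 < V)
    (huy : Tendsto (fun n => u n y) atTop (𝓝 0)) (hvy : Tendsto (fun n => v n y) atTop (𝓝 V)) :
    Tendsto (fun n => w n y) atTop (𝓝 0) := by
  rw [Metric.tendsto_atTop']
  intro ε hε
  obtain ⟨η, hη, hsmall⟩ := exists_forall_abs_right_le hq.lt hg hC (half_pos hV) (half_pos hε)
  obtain ⟨N, hN⟩ := eventually_atTop.1 ((hμ.eventually_ge_atTop 0).and
    ((huy.eventually_le_const hη).and (hvy.eventually_const_le (half_lt_self hV))))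
  refine ⟨N, fun n hn => ?_⟩
  obtain ⟨hμn, hun, hvn⟩ := hN n hn.le
  rw [Real.dist_0_eq_abs]
  exact (hsmall _ _ _ _ _ (h n) (fun t ht => mul_nonneg hμn (hq.nonneg t ht)) (hu n) (hw n) hvn hun
    (hz n)).trans_lt (half_lt_self hε)

end BoundaryLayerLimit

namespace IsSolutionPair

variable {σ τ R : ℝ} {P g : ℝ → ℝ}

lemma deriv_mul_eq_zero {u v w z : ℝ → ℝ} (hP : IsSymmUnimodal σ τ P) (hg : IsSuperlinear g)
    (h : IsSolutionPair σ τ (fun t => -P t) g u v w z) (hu : ∀ t ∈ Icc σ τ, 0 ≤ u t)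
    (hσ : u σ = 0) (hτ : u τ = 0) (hwσ : 0 < v σ → w σ = 0) (hwτ : v τ < 0 → w τ = 0) :
    ∀ t ∈ Icc σ τ, deriv g (u t) * w t = 0 := by
  intro t ht
  have hconc := hP.neg_weight_mul_nonpos hg hu
  by_cases hzero : ∃ s ∈ Ioo σ τ, u s = 0
  · obtain ⟨s, hs, hus⟩ := hzero
    have hc : 0 < min s (σ + τ - s) - σ := sub_pos.2 (lt_min hs.1 (by linarith [hs.2]))
    have hut := h.sol.mul_le_mul_of_nonpos hconc hu ht (sub_pos.1 hc).le
      ⟨min_le_left s _, by linarith [min_le_right s (σ + τ - s)]⟩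
    rw [hus, mul_zero] at hut
    rw [(nonpos_of_mul_nonpos_right hut hc).antisymm (hu t ht), hg.deriv_zero, zero_mul]
  · have hpos : ∀ s ∈ Ioo σ τ, 0 < u s := fun s hs =>
      (hu s (Ioo_subset_Icc_self hs)).lt_of_ne' fun hus => hzero ⟨s, hs, hus⟩
    obtain ⟨c, hc⟩ := nonempty_Ioo.2 hP.lt
    have hcI := Ioo_subset_Icc_self hc
    have hvσ : 0 < v σ := by
      have htan := h.sol.le_add_mul_sub hconc h.sol.left_mem hcI
      nlinarith [hpos c hc, hc.1]
    have hvτ : v τ < 0 := by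
      have htan := h.sol.le_add_mul_sub hconc h.sol.right_mem hcI
      nlinarith [hpos c hc, hc.2]
    rw [hP.eqOn_zero_of_dirichlet hg h hpos hσ hτ (hwσ hvσ) (hwτ hvτ) t ht, mul_zero]

lemma tendsto_integral_weight_zero {u v w z : ℕ → ℝ → ℝ} {U W : ℝ → ℝ}
    (hP : IntervalIntegrable P volume σ τ) (hg : ContDiff ℝ 1 g)
    (h : ∀ n, IsSolutionPair σ τ (fun t => -P t) g (u n) (v n) (w n) (z n))
    (hu : ∀ n, ∀ t ∈ Icc σ τ, |u n t| ≤ R) (hw : ∀ n, ∀ t ∈ Icc σ τ, |w n t| ≤ 1)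
    (hU : ∀ t ∈ Icc σ τ, Tendsto (fun n => u n t) atTop (𝓝 (U t)))
    (hW : ∀ t ∈ Icc σ τ, Tendsto (fun n => w n t) atTop (𝓝 (W t)))
    (hzero : ∀ t ∈ Icc σ τ, deriv g (U t) * W t = 0) :
    Tendsto (fun n => ∫ t in σ..τ, P t * deriv g (u n t) * (w n t * w n t)) atTop (𝓝 0) := by
  obtain ⟨M, hM⟩ := exists_abs_weight_mul_le hg R
  have hmem : ∀ t ∈ uIoc σ τ, t ∈ Icc σ τ := fun t ht => by
    rw [uIoc_of_le (h 0).sol.le] at ht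
    exact Ioc_subset_Icc_self ht
  rw [← intervalIntegral.integral_zero (a := σ) (b := τ) (μ := volume)]
  refine intervalIntegral.tendsto_integral_filter_of_dominated_convergence (fun t => M * |P t|)
    (Eventually.of_forall fun n => ?_) (Eventually.of_forall fun n => ae_of_all _ fun t ht => ?_)
    (hP.abs.const_mul M) (ae_of_all _ fun t ht => ?_)
  · have hwn := (h n).lin.continuousOn
    rw [← uIcc_of_le (h n).sol.le] at hwn
    refine ((h n).lin.intervalIntegrable.neg.mul_continuousOn
      hwn).aestronglyMeasurable_restrict_uIoc.congr (ae_of_all _ fun t => ?_)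
    simp only [Pi.neg_apply]
    ring
  · have hwt := hw n t (hmem t ht)
    rw [Real.norm_eq_abs]
    exact (hM (P t) (u n t) _ (hu n t (hmem t ht))
      (by rw [abs_mul]; exact mul_le_one₀ hwt (abs_nonneg _) hwt)).2
  · have hUt := (hg.continuous_deriv le_rfl).continuousAt.tendsto.comp (hU t (hmem t ht))
    have hWt := hW t (hmem t ht)
    have hlim := (hUt.const_mul (P t)).mul (hWt.mul hWt)
    rwa [show P t * deriv g (U t) * (W t * W t) = P t * (deriv g (U t) * W t) * W t by ring,
      hzero t (hmem t ht), mul_zero, zero_mul] at hlim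

end IsSolutionPair

/-- A solution pair near one positivity interval `[σ, τ]`, where the weight is `-P`, and its
adjacent negativity intervals `[x, σ]` and `[τ, y]`, where it is `μ q`; `u` takes values in `[0, R]`
and `w` is normalized by `|w| ≤ 1`. -/
structure IsLocalPair (x σ τ y R μ : ℝ) (P q g u v w z : ℝ → ℝ) : Prop where
  left : IsSolutionPair x σ (fun t => μ * q t) g u v w z
  mid : IsSolutionPair σ τ (fun t => -P t) g u v w z
  right : IsSolutionPair τ y (fun t => μ * q t) g u v w z
  mem : ∀ t ∈ Icc x y, u t ∈ Icc 0 R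
  abs_le : ∀ t ∈ Icc x y, |w t| ≤ 1

namespace IsLocalPair

variable {x σ τ y R μ ε : ℝ} {P q g : ℝ → ℝ}

section Subinterval

variable {t : ℝ} {u v w z : ℝ → ℝ}

lemma left_subset (h : IsLocalPair x σ τ y R μ P q g u v w z) : Icc x σ ⊆ Icc x y :=
  Icc_subset_Icc_right (h.mid.sol.le.trans h.right.sol.le)

lemma mid_subset (h : IsLocalPair x σ τ y R μ P q g u v w z) : Icc σ τ ⊆ Icc x y :=
  Icc_subset_Icc h.left.sol.le h.right.sol.le

lemma abs_apply_le (h : IsLocalPair x σ τ y R μ P q g u v w z) (ht : t ∈ Icc x y) : |u t| ≤ R := by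
  rw [abs_of_nonneg (h.mem t ht).1]
  exact (h.mem t ht).2

lemma reflect_right_mem (h : IsLocalPair x σ τ y R μ P q g u v w z) (ht : t ∈ Icc τ y) :
    τ + y - t ∈ Icc x y :=
  ⟨by linarith [ht.2, h.left.sol.le, h.mid.sol.le], by linarith [ht.1]⟩

end Subinterval

lemma tendsto_integral_zero {μ : ℕ → ℝ} {u v w z : ℕ → ℝ → ℝ} {U V W Z : ℝ → ℝ}
    (hP : IsSymmUnimodal σ τ P) (hg : IsSuperlinear g) (hl : IsBoundaryLayer x σ q)
    (hr : IsBoundaryLayer τ y fun t => q (τ + y - t)) (hμ : Tendsto μ atTop atTop)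
    (h : ∀ n, IsLocalPair x σ τ y R (μ n) P q g (u n) (v n) (w n) (z n))
    (hlim : IsSolutionPair σ τ (fun t => -P t) g U V W Z)
    (hU : ∀ t ∈ Icc σ τ, Tendsto (fun n => u n t) atTop (𝓝 (U t)))
    (hV : ∀ t ∈ Icc σ τ, Tendsto (fun n => v n t) atTop (𝓝 (V t)))
    (hW : ∀ t ∈ Icc σ τ, Tendsto (fun n => w n t) atTop (𝓝 (W t))) :
    Tendsto (fun n => ∫ t in σ..τ, P t * deriv g (u n t) * (w n t * w n t)) atTop (𝓝 0) := by
  have hσ := hlim.sol.left_mem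
  have hτ := hlim.sol.right_mem
  have hu : ∀ n, ∀ t ∈ Icc σ τ, |u n t| ≤ R := fun n t ht =>
    (h n).abs_apply_le ((h n).mid_subset ht)
  have hw : ∀ n, ∀ t ∈ Icc σ τ, |w n t| ≤ 1 := fun n t ht => (h n).abs_le t ((h n).mid_subset ht)
  obtain ⟨C, hC0, hC⟩ := IsSolutionPair.exists_abs_deriv_le hP.lt hP.intervalIntegrable.neg
    hg.contDiff R
  have hbound := fun n => hC _ _ _ _ (h n).mid (hu n) (hw n)
  have huσ := tendsto_right_zero hl hg hC0 hμ (fun n => (h n).left.sol)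
    (fun n t ht => (h n).mem t ((h n).left_subset ht))
    fun n => (le_abs_self _).trans (hbound n σ hσ).1
  have huτ := tendsto_right_zero hr hg hC0 hμ (fun n => (h n).right.reflect.sol)
    (fun n t ht => (h n).mem _ ((h n).reflect_right_mem ht)) fun n => by
      rw [add_sub_cancel_right]
      exact (neg_le_abs _).trans (hbound n τ hτ).1
  have hwσ : 0 < V σ → W σ = 0 := fun hVσ => tendsto_nhds_unique (hW σ hσ)
    (tendsto_lin_right_zero hl hg hC0 hμ (fun n => (h n).left)
      (fun n t ht => ((h n).mem t ((h n).left_subset ht)).1)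
      (fun n t ht => (h n).abs_le t ((h n).left_subset ht)) (fun n => (hbound n σ hσ).2) hVσ huσ
      (hV σ hσ))
  have hwτ : V τ < 0 → W τ = 0 := fun hVτ => by
    have hzero := tendsto_lin_right_zero hr hg hC0 hμ (fun n => (h n).right.reflect)
      (fun n t ht => ((h n).mem _ ((h n).reflect_right_mem ht)).1)
      (fun n t ht => (h n).abs_le _ ((h n).reflect_right_mem ht))
      (fun n => by rw [add_sub_cancel_right, abs_neg]; exact (hbound n τ hτ).2) (neg_pos.2 hVτ) huτ
      (by simpa only [add_sub_cancel_right] using (hV τ hτ).neg)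
    simp only [add_sub_cancel_right] at hzero
    exact tendsto_nhds_unique (hW τ hτ) hzero
  simp only [add_sub_cancel_right] at huτ
  exact IsSolutionPair.tendsto_integral_weight_zero hP.intervalIntegrable hg.contDiff
    (fun n => (h n).mid) hu hw hU hW (hlim.deriv_mul_eq_zero hP hg
      (fun t ht => ge_of_tendsto' (hU t ht) fun n => ((h n).mem t ((h n).mid_subset ht)).1)
      (tendsto_nhds_unique (hU σ hσ) huσ) (tendsto_nhds_unique (hU τ hτ) huτ) hwσ hwτ)

theorem eventually_integral_le (hP : IsSymmUnimodal σ τ P) (hg : IsSuperlinear g)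
    (hl : IsBoundaryLayer x σ q) (hr : IsBoundaryLayer τ y fun t => q (τ + y - t)) (hε : 0 < ε) :
    ∀ᶠ μ in atTop, ∀ u v w z, IsLocalPair x σ τ y R μ P q g u v w z →
      ∫ t in σ..τ, P t * deriv g (u t) * (w t * w t) ≤ ε := by
  by_contra hfreq
  obtain ⟨μ, hμ, hlarge⟩ := exists_seq_forall_of_frequently (not_eventually.1 hfreq)
  push Not at hlarge
  choose u v w z h hlt using hlarge
  obtain ⟨φ, U, V, W, Z, hφ, hlim, hconv⟩ := IsSolutionPair.exists_subseq_tendsto (R := R) hP.lt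
    hP.intervalIntegrable.neg hg.contDiff (fun n => (h n).mid)
    (fun n t ht => (h n).abs_apply_le ((h n).mid_subset ht))
    fun n t ht => (h n).abs_le t ((h n).mid_subset ht)
  have hzero := tendsto_integral_zero hP hg hl hr (hμ.comp hφ.tendsto_atTop) (fun n => h (φ n)) hlim
    (fun t ht => (hconv t ht).1) (fun t ht => (hconv t ht).2.1) fun t ht => (hconv t ht).2.2
  exact (ge_of_tendsto' hzero fun n => (hlt (φ n)).le).not_gt hε

end IsLocalPair

/-! ### Energy estimate on the whole interval -/

section Energy

variable {x y t : ℝ} {f w z : ℝ → ℝ}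

lemma IsSecondPrimitive.mul_self_le_mul_integral (h : IsSecondPrimitive x y f w z) (hw : w x = 0)
    (ht : t ∈ Icc x y) : w t * w t ≤ (y - x) * ∫ r in x..y, z r * z r := by
  have hzI := h.continuousOn_deriv
  rw [← uIcc_of_le h.le] at hzI
  have hzz : IntervalIntegrable (fun r => z r * z r) volume x y := (hzI.mul hzI).intervalIntegrable
  have hzz_t := intervalIntegrable_of_mem_Icc hzz h.left_mem ht
  have hz_t := intervalIntegrable_of_mem_Icc h.deriv_intervalIntegrable h.left_mem ht
  have hmono : ∫ r in x..t, z r * z r ≤ ∫ r in x..y, z r * z r :=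
    intervalIntegral.integral_mono_interval le_rfl ht.1 ht.2
      (ae_of_all _ fun r => mul_self_nonneg (z r)) hzz
  have hwt : w t = ∫ r in x..t, z r := by rw [← h.sub_eq_integral_deriv h.left_mem ht, hw, sub_zero]
  have hnonneg : 0 ≤ ∫ r in x..t, z r * z r :=
    intervalIntegral.integral_nonneg ht.1 fun r _ => mul_self_nonneg (z r)
  -- Cauchy–Schwarz: the square of `(t - x) z - w t` has nonnegative integral.
  have hsq : 0 ≤ ∫ r in x..t, ((t - x) * z r - w t) ^ 2 :=
    intervalIntegral.integral_nonneg ht.1 fun r _ => sq_nonneg _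
  have hexpand : ∀ r, ((t - x) * z r - w t) ^ 2 =
      (t - x) ^ 2 * (z r * z r) - 2 * (t - x) * w t * z r + w t ^ 2 := fun r => by ring
  simp only [hexpand] at hsq
  rw [intervalIntegral.integral_add ((hzz_t.const_mul _).sub (hz_t.const_mul _))
    intervalIntegrable_const, intervalIntegral.integral_sub (hzz_t.const_mul _) (hz_t.const_mul _),
    intervalIntegral.integral_const_mul, intervalIntegral.integral_const_mul, ← hwt,
    intervalIntegral.integral_const, smul_eq_mul] at hsq
  rcases ht.1.eq_or_lt with rfl | hxt
  · rw [hw, mul_zero]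
    exact mul_nonneg (sub_nonneg.2 ht.2) (hnonneg.trans hmono)
  · have hcs : w t * w t ≤ (t - x) * ∫ r in x..t, z r * z r := by
      refine le_of_mul_le_mul_left ?_ (sub_pos.2 hxt)
      linarith
    exact hcs.trans (mul_le_mul (by linarith [ht.2]) hmono hnonneg (sub_nonneg.2 h.le))

end Energy

/-- The points `a = τ 0 < σ 1 < τ 1 < ⋯ < σ m < τ m < σ (m + 1) = b`. The positivity intervals are
`[σ (j + 1), τ (j + 1)]` for `j < m`, the negativity intervals `[τ i, σ (i + 1)]` for `i ≤ m`. -/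
structure IsAlternatingPartition (a b : ℝ) (m : ℕ) (σ τ : ℕ → ℝ) : Prop where
  left_eq : τ 0 = a
  right_eq : σ (m + 1) = b
  lt_neg : ∀ i ≤ m, τ i < σ (i + 1)
  lt_pos : ∀ j < m, σ (j + 1) < τ (j + 1)

namespace IsAlternatingPartition

variable {a b : ℝ} {m i j : ℕ} {σ τ : ℕ → ℝ}

lemma le_of_le (h : IsAlternatingPartition a b m σ τ) (hij : i ≤ j) (hj : j ≤ m) : τ i ≤ τ j := by
  induction j, hij using Nat.le_induction with
  | base => rfl
  | succ k _ ih => exact (ih (by lia)).trans ((h.lt_neg k (by lia)).trans (h.lt_pos k hj)).le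

lemma left_le (h : IsAlternatingPartition a b m σ τ) (hi : i ≤ m) : a ≤ τ i :=
  h.left_eq ▸ h.le_of_le i.zero_le hi

lemma le_right (h : IsAlternatingPartition a b m σ τ) (hi : i ≤ m) : σ (i + 1) ≤ b := by
  rcases hi.eq_or_lt with rfl | hi
  · exact h.right_eq.le
  · rw [← h.right_eq]
    exact ((h.lt_pos i hi).le.trans (h.le_of_le hi le_rfl)).trans (h.lt_neg m le_rfl).le

lemma lt (h : IsAlternatingPartition a b m σ τ) : a < b :=
  (h.left_le m.zero_le).trans_lt ((h.lt_neg 0 m.zero_le).trans_le (h.le_right m.zero_le))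

lemma neg_subset (h : IsAlternatingPartition a b m σ τ) (hi : i ≤ m) :
    Icc (τ i) (σ (i + 1)) ⊆ Icc a b :=
  Icc_subset_Icc (h.left_le hi) (h.le_right hi)

lemma pos_subset (h : IsAlternatingPartition a b m σ τ) (hj : j < m) :
    Icc (σ (j + 1)) (τ (j + 1)) ⊆ Icc a b :=
  Icc_subset_Icc ((h.left_le hj.le).trans (h.lt_neg j hj.le).le)
    ((h.lt_neg (j + 1) hj).le.trans (h.le_right hj))

lemma forall_mem_Icc (h : IsAlternatingPartition a b m σ τ) {p : ℝ → Prop}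
    (hneg : ∀ i ≤ m, ∀ t ∈ Icc (τ i) (σ (i + 1)), p t)
    (hpos : ∀ j < m, ∀ t ∈ Icc (σ (j + 1)) (τ (j + 1)), p t) : ∀ t ∈ Icc a b, p t := by
  have hprefix : ∀ i ≤ m, ∀ t ∈ Icc a (τ i), p t := by
    intro i
    induction i with
    | zero =>
      intro hi t ht
      exact hneg 0 hi t ⟨h.left_eq.trans_le ht.1, ht.2.trans (h.lt_neg 0 hi).le⟩
    | succ k ih =>
      intro hk t ht
      rcases le_total t (τ k) with htk | htk
      · exact ih (by lia) t ⟨ht.1, htk⟩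
      · rcases le_total t (σ (k + 1)) with hts | hts
        · exact hneg k (by lia) t ⟨htk, hts⟩
        · exact hpos k hk t ⟨hts, ht.2⟩
  intro t ht
  rcases le_total t (τ m) with htm | htm
  · exact hprefix m le_rfl t ⟨ht.1, htm⟩
  · exact hneg m le_rfl t ⟨htm, ht.2.trans h.right_eq.ge⟩

end IsAlternatingPartition

/-- The hypotheses on the weight of the theorem, with positive part `p` and negative part `q`: on
the `j`-th positivity interval (counted from `0`) `p` is represented by the symmetric unimodal
weight `P j`, and `q` has mass next to every endpoint of a positivity interval. The layer to the
right of `τ (j + 1)` is reflected so that its critical endpoint is again the right one. -/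
structure IsAlternatingWeight (a b : ℝ) (m : ℕ) (σ τ : ℕ → ℝ) (p q : ℝ → ℝ) (P : ℕ → ℝ → ℝ) : Prop
    extends IsAlternatingPartition a b m σ τ where
  neg_nonneg : ∀ t, 0 ≤ q t
  pos_intervalIntegrable : IntervalIntegrable p volume a b
  symmUnimodal : ∀ j < m, IsSymmUnimodal (σ (j + 1)) (τ (j + 1)) (P j)
  ae_pos : ∀ j < m, ∀ᵐ t ∂volume.restrict (Icc (σ (j + 1)) (τ (j + 1))), p t = P j t ∧ q t = 0
  ae_neg : ∀ i ≤ m, ∀ᵐ t ∂volume.restrict (Icc (τ i) (σ (i + 1))), p t = 0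
  left_layer : ∀ j < m, IsBoundaryLayer (τ j) (σ (j + 1)) q
  right_layer : ∀ j < m, IsBoundaryLayer (τ (j + 1)) (σ (j + 1 + 1))
    fun t => q (τ (j + 1) + σ (j + 1 + 1) - t)

namespace IsAlternatingWeight

variable {a b R μ ε : ℝ} {m i j : ℕ} {σ τ : ℕ → ℝ} {p q g u v w z φ : ℝ → ℝ} {P : ℕ → ℝ → ℝ}

lemma pos_pair (H : IsAlternatingWeight a b m σ τ p q P) (hj : j < m)
    (h : IsSolutionPair a b (fun t => μ * q t - p t) g u v w z) :
    IsSolutionPair (σ (j + 1)) (τ (j + 1)) (fun t => -P j t) g u v w z := by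
  have hlt := H.lt_pos j hj
  refine (h.mono (H.pos_subset hj (left_mem_Icc.2 hlt.le)).1 hlt.le
    (H.pos_subset hj (right_mem_Icc.2 hlt.le)).2).congr_ae ((H.ae_pos j hj).mono fun t ht => ?_)
  rw [ht.1, ht.2, mul_zero, zero_sub]

lemma neg_pair (H : IsAlternatingWeight a b m σ τ p q P) (hi : i ≤ m)
    (h : IsSolutionPair a b (fun t => μ * q t - p t) g u v w z) :
    IsSolutionPair (τ i) (σ (i + 1)) (fun t => μ * q t) g u v w z :=
  (h.mono (H.left_le hi) (H.lt_neg i hi).le (H.le_right hi)).congr_ae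
    ((H.ae_neg i hi).mono fun t ht => by rw [ht, sub_zero])

-- `u` is convex on the negativity intervals, so it is bounded there by its values at the endpoints.
lemma le_of_forall_pos_le (H : IsAlternatingWeight a b m σ τ p q P) (hg : IsSuperlinear g)
    (hμ : 0 ≤ μ) (hR : 0 ≤ R) (h : IsSolutionPair a b (fun t => μ * q t - p t) g u v w z)
    (hu : ∀ t ∈ Icc a b, 0 ≤ u t) (ha : u a = 0) (hb : u b = 0)
    (hpos : ∀ j < m, ∀ t ∈ Icc (σ (j + 1)) (τ (j + 1)), u t ≤ R) : ∀ t ∈ Icc a b, u t ≤ R := by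
  refine H.forall_mem_Icc (fun i hi t ht => ?_) hpos
  have hτ : u (τ i) ≤ R := by
    cases i with
    | zero => rwa [H.left_eq, ha]
    | succ j => exact hpos j hi _ (right_mem_Icc.2 (H.lt_pos j hi).le)
  have hσ : u (σ (i + 1)) ≤ R := by
    rcases hi.eq_or_lt with rfl | hi
    · rwa [H.right_eq, hb]
    · exact hpos i hi _ (left_mem_Icc.2 (H.lt_pos i hi).le)
  have hconv := (H.neg_pair hi h).sol.convexOn (weight_mul_nonneg hg
    (fun r _ => mul_nonneg hμ (H.neg_nonneg r)) fun r hr => hu r (H.neg_subset hi hr))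
  have hle := (H.lt_neg i hi).le
  exact (hconv.le_max_of_mem_Icc (left_mem_Icc.2 hle) (right_mem_Icc.2 hle) ht).trans (max_le hτ hσ)

lemma exists_forall_le (H : IsAlternatingWeight a b m σ τ p q P) (hg : IsSuperlinear g) :
    ∃ R, ∀ μ ≥ 0, ∀ u v w z, IsSolutionPair a b (fun t => μ * q t - p t) g u v w z →
      (∀ t ∈ Icc a b, 0 ≤ u t) → u a = 0 → u b = 0 → ∀ t ∈ Icc a b, u t ≤ R := by
  have hbounds := (eventually_all_finset (Finset.range m)).2 fun j hj =>
    (H.symmUnimodal j (Finset.mem_range.1 hj)).eventually_forall_solution_le hg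
  obtain ⟨R, hR, hR0⟩ := (hbounds.and (eventually_ge_atTop 0)).exists
  refine ⟨R, fun μ hμ u v w z h hu ha hb => H.le_of_forall_pos_le hg hμ hR0 h hu ha hb fun j hj =>
    hR j (Finset.mem_range.2 hj) u v (H.pos_pair hj h).sol fun t ht => hu t (H.pos_subset hj ht)⟩

lemma localPair (H : IsAlternatingWeight a b m σ τ p q P) (hj : j < m)
    (h : IsSolutionPair a b (fun t => μ * q t - p t) g u v w z)
    (hu : ∀ t ∈ Icc a b, u t ∈ Icc 0 R) (hw : ∀ t ∈ Icc a b, |w t| ≤ 1) :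
    IsLocalPair (τ j) (σ (j + 1)) (τ (j + 1)) (σ (j + 1 + 1)) R μ (P j) q g u v w z := by
  have hsub := Icc_subset_Icc (H.left_le hj.le) (H.le_right hj)
  exact ⟨H.neg_pair hj.le h, H.pos_pair hj h, H.neg_pair hj h, fun t ht => hu t (hsub ht),
    fun t ht => hw t (hsub ht)⟩

lemma integral_mul_eq_sum (H : IsAlternatingWeight a b m σ τ p q P)
    (hφ : ContinuousOn φ (Icc a b)) :
    ∫ t in a..b, p t * φ t =
      ∑ j ∈ Finset.range m, ∫ t in (σ (j + 1))..(τ (j + 1)), P j t * φ t := by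
  rw [← uIcc_of_le H.lt.le] at hφ
  have hint : IntervalIntegrable (fun t => p t * φ t) volume a b :=
    H.pos_intervalIntegrable.mul_continuousOn hφ
  have hτ : ∀ i ≤ m, τ i ∈ Icc a b := fun i hi =>
    H.neg_subset hi (left_mem_Icc.2 (H.lt_neg i hi).le)
  have hσ : ∀ i ≤ m, σ (i + 1) ∈ Icc a b := fun i hi =>
    H.neg_subset hi (right_mem_Icc.2 (H.lt_neg i hi).le)
  have hneg : ∀ i ≤ m, ∫ t in (τ i)..(σ (i + 1)), p t * φ t = 0 := fun i hi => by
    have hle := (H.lt_neg i hi).le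
    refine intervalIntegral.integral_zero_ae ((ae_restrict_iff' measurableSet_uIoc).1
      (ae_restrict_uIoc_of_ae_restrict_Icc ((H.ae_neg i hi).mono fun t ht => ?_)
        (left_mem_Icc.2 hle) (right_mem_Icc.2 hle)))
    rw [ht, zero_mul]
  have hpos : ∀ j < m, ∫ t in (τ j)..(τ (j + 1)), p t * φ t =
      ∫ t in (σ (j + 1))..(τ (j + 1)), P j t * φ t := fun j hj => by
    have hle := (H.lt_pos j hj).le
    rw [← intervalIntegral.integral_add_adjacent_intervals
      (intervalIntegrable_of_mem_Icc hint (hτ j hj.le) (hσ j hj.le))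
      (intervalIntegrable_of_mem_Icc hint (hσ j hj.le) (hτ (j + 1) hj)), hneg j hj.le, zero_add]
    exact intervalIntegral.integral_congr_ae_restrict (ae_restrict_uIoc_of_ae_restrict_Icc
      ((H.ae_pos j hj).mono fun t ht => by simp only [ht.1])
      (left_mem_Icc.2 hle) (right_mem_Icc.2 hle))
  have hlast := hneg m le_rfl
  have hb := H.right_eq ▸ hσ m le_rfl
  rw [H.right_eq] at hlast
  rw [← intervalIntegral.integral_add_adjacent_intervals
    (intervalIntegrable_of_mem_Icc hint (left_mem_Icc.2 H.lt.le) (hτ m le_rfl))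
    (intervalIntegrable_of_mem_Icc hint (hτ m le_rfl) hb), hlast, add_zero, ← H.left_eq,
    ← intervalIntegral.sum_integral_adjacent_intervals fun j hj =>
      intervalIntegrable_of_mem_Icc hint (hτ j hj.le) (hτ (j + 1) hj)]
  exact Finset.sum_congr rfl fun j hj => hpos j (Finset.mem_range.1 hj)

lemma integral_mul_self_le (H : IsAlternatingWeight a b m σ τ p q P) (hg : IsSuperlinear g)
    (hμ : 0 ≤ μ) (h : IsSolutionPair a b (fun t => μ * q t - p t) g u v w z)
    (hu : ∀ t ∈ Icc a b, 0 ≤ u t) (ha : w a = 0) (hb : w b = 0) :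
    ∫ t in a..b, z t * z t ≤ ∫ t in a..b, p t * (deriv g (u t) * (w t * w t)) := by
  have huI := h.sol.continuousOn
  have hwI := h.lin.continuousOn
  have hzI := h.lin.continuousOn_deriv
  rw [← uIcc_of_le h.sol.le] at huI hwI hzI
  have hwf := h.lin.intervalIntegrable.continuousOn_mul hwI
  have hzz : IntervalIntegrable (fun t => z t * z t) volume a b := (hzI.mul hzI).intervalIntegrable
  have hgreen := h.lin.integral_deriv_mul_deriv_add h.lin
  rw [ha, hb, zero_mul, zero_mul, sub_zero, intervalIntegral.integral_add hzz hwf] at hgreen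
  rw [eq_neg_of_add_eq_zero_left hgreen, ← intervalIntegral.integral_neg]
  refine intervalIntegral.integral_mono_on h.sol.le hwf.neg
    (H.pos_intervalIntegrable.mul_continuousOn
      ((hg.continuous_deriv.comp_continuousOn huI).mul (hwI.mul hwI))) fun t ht => ?_
  linarith [mul_nonneg (mul_nonneg hμ (H.neg_nonneg t))
    (mul_nonneg (hg.deriv_nonneg (hu t ht)) (mul_self_nonneg (w t)))]

lemma eventually_integral_mul_self_le (H : IsAlternatingWeight a b m σ τ p q P)
    (hg : IsSuperlinear g) (hε : 0 < ε) :
    ∀ᶠ μ in atTop, ∀ u v w z, IsSolutionPair a b (fun t => μ * q t - p t) g u v w z →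
      (∀ t ∈ Icc a b, 0 ≤ u t) → u a = 0 → u b = 0 → w a = 0 → w b = 0 →
      (∀ t ∈ Icc a b, |w t| ≤ 1) → ∫ t in a..b, z t * z t ≤ ε := by
  obtain ⟨R, hR⟩ := H.exists_forall_le hg
  have hlocal := (eventually_all_finset (Finset.range m)).2 fun j hj =>
    have hj := Finset.mem_range.1 hj
    IsLocalPair.eventually_integral_le (R := R) (H.symmUnimodal j hj) hg (H.left_layer j hj)
      (H.right_layer j hj) (show 0 < ε / (m + 1) by positivity)
  filter_upwards [hlocal, eventually_ge_atTop 0] with μ hμ hμ0 u v w z h hu hua hub hwa hwb hw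
  have huR : ∀ t ∈ Icc a b, u t ∈ Icc 0 R := fun t ht =>
    ⟨hu t ht, hR μ hμ0 u v w z h hu hua hub t ht⟩
  have hwI := h.lin.continuousOn
  calc ∫ t in a..b, z t * z t ≤ ∫ t in a..b, p t * (deriv g (u t) * (w t * w t)) :=
        H.integral_mul_self_le hg hμ0 h hu hwa hwb
    _ = ∑ j ∈ Finset.range m, ∫ t in (σ (j + 1))..(τ (j + 1)),
          P j t * (deriv g (u t) * (w t * w t)) :=
        H.integral_mul_eq_sum
          ((hg.continuous_deriv.comp_continuousOn h.sol.continuousOn).mul (hwI.mul hwI))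
    _ ≤ ∑ j ∈ Finset.range m, ε / (m + 1) := by
        refine Finset.sum_le_sum fun j hj => ?_
        simpa only [mul_assoc] using
          hμ j hj u v w z (H.localPair (Finset.mem_range.1 hj) h huR hw)
    _ ≤ ε := by
        rw [Finset.sum_const, Finset.card_range, nsmul_eq_mul, mul_div_assoc',
          div_le_iff₀ (by positivity)]
        linarith

theorem eventually_forall_eq_zero (H : IsAlternatingWeight a b m σ τ p q P)
    (hg : IsSuperlinear g) :
    ∀ᶠ μ in atTop, ∀ u v w z, IsSolutionPair a b (fun t => μ * q t - p t) g u v w z →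
      u a = 0 → u b = 0 → (∀ t ∈ Ioo a b, 0 < u t) → w a = 0 → w b = 0 →
      ∀ t ∈ Icc a b, w t = 0 := by
  have hab : 0 < b - a := sub_pos.2 H.lt
  filter_upwards [H.eventually_integral_mul_self_le hg (show 0 < 1 / (2 * (b - a)) by positivity)]
    with μ hμ u v w z h hua hub hu hwa hwb
  obtain ⟨s, hs, hmax⟩ := isCompact_Icc.exists_isMaxOn (nonempty_Icc.2 H.lt.le)
    h.lin.continuousOn.abs
  by_contra! hne
  obtain ⟨t, ht, hwt⟩ := hne
  have hws : 0 < |w s| := (abs_pos.2 hwt).trans_le (hmax ht)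
  have hnorm := h.const_mul_lin |w s|⁻¹
  have henergy := hμ u v _ _ hnorm (nonneg_on_Icc_of_pos_on_Ioo H.lt.ne h.sol.continuousOn hu)
    hua hub (by rw [hwa, mul_zero]) (by rw [hwb, mul_zero]) fun r hr => by
      rw [abs_mul, abs_of_pos (inv_pos.2 hws)]
      exact inv_mul_le_one_of_le₀ (hmax hr) hws.le
  have hsup := hnorm.lin.mul_self_le_mul_integral (by rw [hwa, mul_zero]) hs
  have hone : |w s|⁻¹ * w s * (|w s|⁻¹ * w s) = 1 := by
    rw [mul_mul_mul_comm, ← abs_mul_abs_self (w s), ← mul_mul_mul_comm, inv_mul_cancel₀ hws.ne',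
      one_mul]
  have hhalf : (b - a) * (1 / (2 * (b - a))) = 1 / 2 := by field_simp
  linarith [mul_le_mul_of_nonneg_left henergy hab.le]

end IsAlternatingWeight

/-! ### The hypotheses of the theorem -/

lemma isSuperlinear_of_contDiffOn {g : ℝ → ℝ} (hg_C1 : ContDiffOn ℝ 1 g (Ici 0))
    (hg_pos : ∀ s > 0, 0 < g s) (hg_ext : ∀ s ≤ 0, g s = 0)
    (hg_s : ∀ s > 0, g s / s < deriv g s)
    (hg_zero : Tendsto (fun s => g s / s) (𝓝[>] 0) (𝓝 0))
    (hg_infty : Tendsto (fun s => g s / s) atTop atTop) : IsSuperlinear g := by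
  have hg0 : g 0 = 0 := hg_ext 0 le_rfl
  have hneg : ∀ s < 0, HasDerivAt g 0 s := fun s hs =>
    (hasDerivAt_const s (0 : ℝ)).congr_of_eventuallyEq
      (mem_of_superset (Iio_mem_nhds hs) fun r hr => hg_ext r (le_of_lt hr))
  have hzero : HasDerivAt g 0 0 := by
    have hslope : ∀ s, slope g 0 s = g s / s := fun s => by
      rw [slope_def_field, hg0, sub_zero, sub_zero]
    rw [hasDerivAt_iff_tendsto_slope, ← Iio_union_Ioi, nhdsWithin_union, tendsto_sup]
    refine ⟨tendsto_const_nhds.congr' ?_, hg_zero.congr fun s => (hslope s).symm⟩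
    filter_upwards [self_mem_nhdsWithin] with s hs
    rw [hslope, hg_ext s (le_of_lt hs), zero_div]
  have hdiff : Differentiable ℝ g := fun s => by
    rcases lt_trichotomy s 0 with hs | rfl | hs
    · exact (hneg s hs).differentiableAt
    · exact hzero.differentiableAt
    · exact (hg_C1.contDiffAt (Ici_mem_nhds hs)).differentiableAt one_ne_zero
  have hcont_left : ContinuousOn (deriv g) (Iic 0) :=
    (continuousOn_const (c := (0 : ℝ))).congr fun s hs => by
      rcases (mem_Iic.1 hs).eq_or_lt with rfl | hs
      · exact hzero.deriv
      · exact (hneg s hs).deriv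
  have hcont_right : ContinuousOn (deriv g) (Ici 0) :=
    (hg_C1.continuousOn_derivWithin (uniqueDiffOn_Ici 0) le_rfl).congr fun s hs =>
      ((hdiff s).derivWithin (uniqueDiffOn_Ici 0 s hs)).symm
  have hcont : Continuous (deriv g) := by
    rw [← continuousOn_univ, ← Iic_union_Ici (a := (0 : ℝ))]
    exact hcont_left.union_of_isClosed hcont_right isClosed_Iic isClosed_Ici
  exact ⟨contDiff_one_iff_deriv.2 ⟨hdiff, hcont⟩, hg0, hg_pos,
    fun s hs => (div_lt_iff₀ hs).1 (hg_s s hs), hzero.deriv, hg_infty⟩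

section CaratheodorySolution

variable {a b μ : ℝ} {F : ℝ → ℝ → ℝ} {g h u u₁ w w₁ : ℝ → ℝ}

lemma IsCaraSol.isSecondPrimitive (hab : a ≤ b) (hu : IsCaraSol a b F u u₁) :
    IsSecondPrimitive a b (fun t => -F t (u t)) u u₁ := by
  obtain ⟨hderiv, hint, heq⟩ := hu
  refine ⟨hab, hderiv, hint.neg, fun s hs t ht => ?_⟩
  rw [intervalIntegral.integral_neg, heq s hs, heq t ht,
    ← intervalIntegral.integral_interval_sub_left
      (intervalIntegrable_of_mem_Icc hint (left_mem_Icc.2 hab) ht)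
      (intervalIntegrable_of_mem_Icc hint (left_mem_Icc.2 hab) hs)]
  ring

lemma IsCaraSol.isSolutionPair (hab : a ≤ b)
    (hu : IsCaraSol a b (fun s x => (posW h s - μ * negW h s) * g x) u u₁)
    (hw : IsCaraSol a b (fun s x => (posW h s - μ * negW h s) * deriv g (u s) * x) w w₁) :
    IsSolutionPair a b (fun t => μ * negW h t - posW h t) g u u₁ w w₁ where
  sol := (hu.isSecondPrimitive hab).congr_ae (ae_of_all _ fun t => by ring)
  lin := (hw.isSecondPrimitive hab).congr_ae (ae_of_all _ fun t => by ring)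

end CaratheodorySolution

section WeightParts

variable {x y t : ℝ} {h : ℝ → ℝ}

lemma posW_nonneg (h : ℝ → ℝ) (t : ℝ) : 0 ≤ posW h t := by
  unfold posW
  linarith [neg_abs_le (h t)]

lemma negW_nonneg (h : ℝ → ℝ) (t : ℝ) : 0 ≤ negW h t := by
  unfold negW
  linarith [le_abs_self (h t)]

lemma posW_of_nonneg (ht : 0 ≤ h t) : posW h t = h t := by
  rw [posW, abs_of_nonneg ht, add_halves]

lemma posW_of_nonpos (ht : h t ≤ 0) : posW h t = 0 := by
  rw [posW, abs_of_nonpos ht, neg_div, neg_add_cancel]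

lemma negW_of_nonneg (ht : 0 ≤ h t) : negW h t = 0 := by
  rw [negW, abs_of_nonneg ht, sub_self]

lemma eq_zero_of_negW_eq_zero (ht : h t ≤ 0) (hneg : negW h t = 0) : h t = 0 := by
  rw [negW, abs_of_nonpos ht] at hneg
  linarith

lemma intervalIntegrable_posW (hh : IntervalIntegrable h volume x y) :
    IntervalIntegrable (posW h) volume x y :=
  (hh.abs.div_const 2).add (hh.div_const 2)

lemma intervalIntegrable_negW (hh : IntervalIntegrable h volume x y) :
    IntervalIntegrable (negW h) volume x y :=
  (hh.abs.div_const 2).sub (hh.div_const 2)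

end WeightParts

/-- The even extension of `p` across the midpoint of `[σ, τ]`, from the left half: the everywhere
symmetric representative of a weight that is symmetric almost everywhere. -/
noncomputable def evenExtension (σ τ : ℝ) (p : ℝ → ℝ) (t : ℝ) : ℝ :=
  p (min t (σ + τ - t))

section EvenExtension

variable {σ τ t : ℝ} {p : ℝ → ℝ}

lemma evenExtension_of_le (ht : t ≤ (σ + τ) / 2) : evenExtension σ τ p t = p t := by
  rw [evenExtension, min_eq_left (by linarith)]

lemma evenExtension_of_ge (ht : (σ + τ) / 2 ≤ t) : evenExtension σ τ p t = p (σ + τ - t) := by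
  rw [evenExtension, min_eq_right (by linarith)]

lemma ae_eq_evenExtension
    (hsymm : ∀ᵐ t ∂volume.restrict (Icc σ τ), p t = p (σ + τ - t)) :
    ∀ᵐ t ∂volume.restrict (Icc σ τ), p t = evenExtension σ τ p t := by
  filter_upwards [hsymm] with t ht
  rcases le_total t ((σ + τ) / 2) with hle | hge
  · rw [evenExtension_of_le hle]
  · rw [evenExtension_of_ge hge, ht]

lemma exists_pos_left_half (hp : ∀ t, 0 ≤ p t)
    (hsymm : ∀ᵐ t ∂volume.restrict (Icc σ τ), p t = p (σ + τ - t))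
    (hne : ¬ ∀ᵐ t ∂volume.restrict (Icc σ τ), p t = 0) : ∃ t ∈ Ico σ ((σ + τ) / 2), 0 < p t := by
  by_contra! hnonpos
  refine hne ?_
  filter_upwards [hsymm, ae_restrict_mem measurableSet_Icc,
    ae_restrict_of_ae (Measure.ae_ne volume ((σ + τ) / 2))] with t ht hmem hmid
  refine le_antisymm ?_ (hp t)
  rcases hmid.lt_or_gt with hlt | hgt
  · exact hnonpos t ⟨hmem.1, hlt⟩
  · rw [ht]
    exact hnonpos _ ⟨by linarith [hmem.2], by linarith⟩

lemma isSymmUnimodal_evenExtension (hp : ∀ t, 0 ≤ p t)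
    (hsymm : ∀ᵐ t ∂volume.restrict (Icc σ τ), p t = p (σ + τ - t))
    (hmono : MonotoneOn p (Icc σ ((σ + τ) / 2)))
    (hne : ¬ ∀ᵐ t ∂volume.restrict (Icc σ τ), p t = 0) :
    IsSymmUnimodal σ τ (evenExtension σ τ p) where
  nonneg _ _ := hp _
  symm t := by rw [evenExtension, evenExtension, sub_sub_cancel, min_comm]
  monotoneOn := hmono.congr fun t ht => (evenExtension_of_le ht.2).symm
  exists_pos := by
    obtain ⟨t, ht, hpt⟩ := exists_pos_left_half hp hsymm hne
    obtain ⟨c, htc, hc⟩ := exists_between ht.2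
    refine ⟨c, ⟨ht.1.trans_lt htc, hc⟩, ?_⟩
    rw [evenExtension_of_le hc.le]
    exact hpt.trans_le (hmono ⟨ht.1, ht.2.le⟩ ⟨ht.1.trans htc.le, hc.le⟩ htc.le)

end EvenExtension

section BoundaryMass

variable {x y : ℝ} {q : ℝ → ℝ}

lemma lt_of_not_ae_restrict_Icc {p : ℝ → Prop} (h : ¬ ∀ᵐ t ∂volume.restrict (Icc x y), p t) :
    x < y := by
  by_contra! hyx
  refine h ?_
  rw [Measure.restrict_eq_zero.2 (by rw [Real.volume_Icc, ENNReal.ofReal_of_nonpos (by linarith)])]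
  exact ae_zero.le trivial

lemma integral_pos_of_not_ae_eq_zero (hq : ∀ t, 0 ≤ q t) (hint : IntervalIntegrable q volume x y)
    (hne : ¬ ∀ᵐ t ∂volume.restrict (Icc x y), q t = 0) : 0 < ∫ t in x..y, q t := by
  have hxy := (lt_of_not_ae_restrict_Icc hne).le
  refine (intervalIntegral.integral_nonneg hxy fun t _ => hq t).lt_of_ne' fun hzero => hne ?_
  rw [← Measure.restrict_congr_set Ioc_ae_eq_Icc]
  exact (intervalIntegral.integral_eq_zero_iff_of_le_of_nonneg_ae hxy (ae_of_all _ hq) hint).1 hzero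

lemma isBoundaryLayer_of_not_ae_eq_zero (hxy : x < y) (hq : ∀ t, 0 ≤ q t)
    (hint : IntervalIntegrable q volume x y)
    (hne : ∀ δ > 0, δ ≤ y - x → ¬ ∀ᵐ t ∂volume.restrict (Icc (y - δ) y), q t = 0) :
    IsBoundaryLayer x y q where
  lt := hxy
  nonneg t _ := hq t
  intervalIntegrable := hint
  integral_pos s hs := by
    have hs_ne := hne (y - s) (sub_pos.2 hs.2) (by linarith [hs.1])
    rw [sub_sub_cancel] at hs_ne
    exact integral_pos_of_not_ae_eq_zero hq
      (intervalIntegrable_of_mem_Icc hint ⟨hs.1, hs.2.le⟩ (right_mem_Icc.2 hxy.le)) hs_ne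

lemma isBoundaryLayer_reflect_of_not_ae_eq_zero (hxy : x < y) (hq : ∀ t, 0 ≤ q t)
    (hint : IntervalIntegrable q volume x y)
    (hne : ∀ δ > 0, δ ≤ y - x → ¬ ∀ᵐ t ∂volume.restrict (Icc x (x + δ)), q t = 0) :
    IsBoundaryLayer x y fun t => q (x + y - t) where
  lt := hxy
  nonneg t _ := hq _
  intervalIntegrable := by
    simpa only [add_sub_cancel_left, add_sub_cancel_right] using (hint.comp_sub_left (x + y)).symm
  integral_pos s hs := by
    rw [intervalIntegral.integral_comp_sub_left, add_sub_cancel_right, add_sub_assoc]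
    have hδ : y - s ≤ y - x := by linarith [hs.1]
    exact integral_pos_of_not_ae_eq_zero hq (intervalIntegrable_of_mem_Icc hint
      (left_mem_Icc.2 hxy.le) ⟨by linarith [hs.2], by linarith⟩) (hne (y - s) (sub_pos.2 hs.2) hδ)

end BoundaryMass

section AlternatingWeight

variable {a b : ℝ} {m : ℕ} {σ τ : ℕ → ℝ} {h : ℝ → ℝ}

lemma isAlternatingPartition_of_not_ae_eq_zero (hm : 1 ≤ m) (hτ0 : τ 0 = a)
    (hσlast : σ (m + 1) = b) (hστ : ∀ i, 1 ≤ i → i ≤ m → σ i < τ i)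
    (hτσ : ∀ i, 1 ≤ i → i < m → τ i < σ (i + 1))
    (hleft : ¬ ∀ᵐ t ∂volume.restrict (Icc (σ 1 - 1) (σ 1) ∩ Icc a b), h t = 0)
    (hright : ¬ ∀ᵐ t ∂volume.restrict (Icc (τ m) (τ m + 1) ∩ Icc a b), h t = 0) :
    IsAlternatingPartition a b m σ τ := by
  rw [Icc_inter_Icc] at hleft hright
  refine ⟨hτ0, hσlast, fun i hi => ?_, fun j hj => hστ (j + 1) j.succ_pos hj⟩
  rcases i.eq_zero_or_pos with rfl | hi0
  · exact hτ0.trans_lt ((le_max_right _ _).trans_lt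
      ((lt_of_not_ae_restrict_Icc hleft).trans_le (min_le_left _ _)))
  · rcases hi.eq_or_lt with rfl | him
    · exact ((le_max_left _ _).trans_lt
        ((lt_of_not_ae_restrict_Icc hright).trans_le (min_le_right _ _))).trans_eq hσlast.symm
    · exact hτσ i hi0 him

lemma not_ae_negW_eq_zero {x y : ℝ} {i : ℕ} (H : IsAlternatingPartition a b m σ τ) (hi : i ≤ m)
    (hneg : ∀ᵐ t ∂volume.restrict (Icc (τ i) (σ (i + 1))), h t ≤ 0) (hx : τ i ≤ x)
    (hy : y ≤ σ (i + 1)) (hne : ¬ ∀ᵐ t ∂volume.restrict (Icc x y ∩ Icc a b), h t = 0) :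
    ¬ ∀ᵐ t ∂volume.restrict (Icc x y), negW h t = 0 := by
  have hsub : Icc x y ⊆ Icc (τ i) (σ (i + 1)) := Icc_subset_Icc hx hy
  rw [inter_eq_left.2 (hsub.trans (H.neg_subset hi))] at hne
  refine fun hzero => hne ?_
  filter_upwards [hzero, ae_restrict_of_ae_restrict_of_subset hsub hneg] with t ht hle
  exact eq_zero_of_negW_eq_zero hle ht

lemma IsAlternatingPartition.isAlternatingWeight (H : IsAlternatingPartition a b m σ τ)
    (hint : IntegrableOn h (Icc a b))
    (hpos : ∀ i, 1 ≤ i → i ≤ m → (∀ᵐ t ∂volume.restrict (Icc (σ i) (τ i)), 0 ≤ h t) ∧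
      ¬ ∀ᵐ t ∂volume.restrict (Icc (σ i) (τ i)), h t = 0)
    (hneg : ∀ i ≤ m, ∀ᵐ t ∂volume.restrict (Icc (τ i) (σ (i + 1))), h t ≤ 0)
    (hσleft : ∀ i, 1 ≤ i → i ≤ m → ∀ δ > (0 : ℝ),
      ¬ ∀ᵐ t ∂volume.restrict (Icc (σ i - δ) (σ i) ∩ Icc a b), h t = 0)
    (hτright : ∀ i, 1 ≤ i → i ≤ m → ∀ δ > (0 : ℝ),
      ¬ ∀ᵐ t ∂volume.restrict (Icc (τ i) (τ i + δ) ∩ Icc a b), h t = 0)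
    (hsymm : ∀ i, 1 ≤ i → i ≤ m →
      ∀ᵐ t ∂volume.restrict (Icc (σ i) (τ i)), posW h t = posW h (σ i + τ i - t))
    (hmono : ∀ i, 1 ≤ i → i ≤ m → MonotoneOn (posW h) (Icc (σ i) ((σ i + τ i) / 2))) :
    IsAlternatingWeight a b m σ τ (posW h) (negW h)
      fun j => evenExtension (σ (j + 1)) (τ (j + 1)) (posW h) := by
  have hI : IntervalIntegrable h volume a b :=
    (intervalIntegrable_iff_integrableOn_Icc_of_le H.lt.le).2 hint
  have hI_neg : ∀ i ≤ m, IntervalIntegrable (negW h) volume (τ i) (σ (i + 1)) := fun i hi =>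
    intervalIntegrable_of_mem_Icc (intervalIntegrable_negW hI)
      (H.neg_subset hi (left_mem_Icc.2 (H.lt_neg i hi).le))
      (H.neg_subset hi (right_mem_Icc.2 (H.lt_neg i hi).le))
  refine ⟨H, negW_nonneg h, intervalIntegrable_posW hI, fun j hj => ?_, fun j hj => ?_,
    fun i hi => (hneg i hi).mono fun t => posW_of_nonpos, fun j hj => ?_, fun j hj => ?_⟩
  · refine isSymmUnimodal_evenExtension (posW_nonneg h) (hsymm _ j.succ_pos hj)
      (hmono _ j.succ_pos hj) fun hzero => (hpos _ j.succ_pos hj).2 ?_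
    filter_upwards [hzero, (hpos _ j.succ_pos hj).1] with t ht hnonneg
    rwa [posW_of_nonneg hnonneg] at ht
  · exact (ae_eq_evenExtension (hsymm _ j.succ_pos hj)).and
      ((hpos _ j.succ_pos hj).1.mono fun t => negW_of_nonneg)
  · exact isBoundaryLayer_of_not_ae_eq_zero (H.lt_neg j hj.le) (negW_nonneg h) (hI_neg j hj.le)
      fun δ hδ hle => not_ae_negW_eq_zero H hj.le (hneg j hj.le) (by linarith) le_rfl
        (hσleft _ j.succ_pos hj δ hδ)
  · exact isBoundaryLayer_reflect_of_not_ae_eq_zero (H.lt_neg _ hj) (negW_nonneg h)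
      (hI_neg _ hj) fun δ hδ hle => not_ae_negW_eq_zero H hj (hneg _ hj) le_rfl (by linarith)
        (hτright _ j.succ_pos hj δ hδ)

end AlternatingWeight

/-- **Non-degeneracy for large `μ`.** Under the assumptions of the
exact multiplicity theorem, there exists `μ** > 0` such that for every `μ > μ**`
every positive solution of `(D_μ)` is non-degenerate: the only Carathéodory
solution of `w'' + (h⁺ - μ h⁻) g'(u) w = 0`, `w(a) = 0 = w(b)`, is `w ≡ 0`. -/
theorem nondegeneracy_for_large_mu
    (a b : ℝ) (hab : a < b)
    (g : ℝ → ℝ)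
    (hg_C1 : ContDiffOn ℝ 1 g (Set.Ici 0))
    (hg0 : g 0 = 0)
    (hg_pos : ∀ s > 0, 0 < g s)
    (hg_ext : ∀ s ≤ (0 : ℝ), g s = 0)
    (hg_s : ∀ s > (0 : ℝ), g s / s < deriv g s)
    (hg_zero : deriv g 0 = 0 ∧
      Tendsto (fun s => g s / s) (nhdsWithin 0 (Set.Ioi 0)) (nhds 0))
    (hg_infty : Tendsto (fun s => g s / s) atTop atTop)
    (h : ℝ → ℝ)
    (hh_int : IntegrableOn h (Set.Icc a b))
    (m : ℕ) (hm : 1 ≤ m)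
    (σ τ : ℕ → ℝ)
    (hτ0 : τ 0 = a) (hσlast : σ (m + 1) = b)
    (h0 : τ 0 ≤ σ 1) (hlast : τ m ≤ σ (m + 1))
    (hστ : ∀ i, 1 ≤ i → i ≤ m → σ i < τ i)
    (hτσ : ∀ i, 1 ≤ i → i < m → τ i < σ (i + 1))
    (hpos : ∀ i, 1 ≤ i → i ≤ m →
      (∀ᵐ t ∂(volume.restrict (Set.Icc (σ i) (τ i))), 0 ≤ h t) ∧
      ¬ (∀ᵐ t ∂(volume.restrict (Set.Icc (σ i) (τ i))), h t = 0))
    (hneg : ∀ i, i ≤ m →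
      (∀ᵐ t ∂(volume.restrict (Set.Icc (τ i) (σ (i + 1)))), h t ≤ 0) ∧
      (τ i < σ (i + 1) →
        ¬ (∀ᵐ t ∂(volume.restrict (Set.Icc (τ i) (σ (i + 1)))), h t = 0)))
    (hσleft : ∀ i, 1 ≤ i → i ≤ m → ∀ δ > (0 : ℝ),
      ¬ (∀ᵐ t ∂(volume.restrict (Set.Icc (σ i - δ) (σ i) ∩ Set.Icc a b)), h t = 0))
    (hτright : ∀ i, 1 ≤ i → i ≤ m → ∀ δ > (0 : ℝ),
      ¬ (∀ᵐ t ∂(volume.restrict (Set.Icc (τ i) (τ i + δ) ∩ Set.Icc a b)), h t = 0))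
    (hBV : ∀ i, 1 ≤ i → i ≤ m → BoundedVariationOn (posW h) (Set.Icc (σ i) (τ i)))
    (hsymm : ∀ i, 1 ≤ i → i ≤ m →
      ∀ᵐ t ∂(volume.restrict (Set.Icc (σ i) (τ i))), posW h t = posW h (σ i + τ i - t))
    (hmono : ∀ i, 1 ≤ i → i ≤ m →
      MonotoneOn (posW h) (Set.Icc (σ i) ((σ i + τ i) / 2))) :
    ∃ μss > (0 : ℝ), ∀ μ > μss,
      ∀ u u₁ : ℝ → ℝ,
        IsCaraSol a b (fun s x => (posW h s - μ * negW h s) * g x) u u₁ →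
        u a = 0 → u b = 0 → (∀ t ∈ Set.Ioo a b, 0 < u t) →
        ∀ w w₁ : ℝ → ℝ,
          IsCaraSol a b
            (fun s x => (posW h s - μ * negW h s) * deriv g (u s) * x) w w₁ →
          w a = 0 → w b = 0 → ∀ t ∈ Set.Icc a b, w t = 0 := by
  have hg : IsSuperlinear g :=
    isSuperlinear_of_contDiffOn hg_C1 hg_pos hg_ext hg_s hg_zero.2 hg_infty
  have hpart : IsAlternatingPartition a b m σ τ :=
    isAlternatingPartition_of_not_ae_eq_zero hm hτ0 hσlast hστ hτσ
      (hσleft 1 le_rfl hm 1 one_pos) (hτright m hm le_rfl 1 one_pos)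
  have hweight := hpart.isAlternatingWeight hh_int hpos (fun i hi => (hneg i hi).1) hσleft hτright
    hsymm hmono
  obtain ⟨M, hM⟩ := eventually_atTop.1 (hweight.eventually_forall_eq_zero hg)
  refine ⟨max M 1, lt_max_of_lt_right one_pos, fun μ hμ u u₁ hu hua hub hupos w w₁ hw hwa hwb => ?_⟩
  exact hM μ ((le_max_left M 1).trans hμ.le) u u₁ w w₁ (hu.isSolutionPair hab.le hw)
    hua hub hupos hwa hwb
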